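/- arXiv:cs/0703029 — 3 statements merged into one kernel-verified Lean document; each statement's English description precedes it below -/
import Mathlib

section
/- Let A = (a_{ij}) ∈ ℝ^{N×N} be a nonzero skew-symmetric matrix, a := max |a_{ij}|, and t > 0. With log Φ̃(t,A) := E log det(√t I_N + Y_A) for Y_A built from i.i.d. standard Gaussians, one has (1/N) log Φ̃(t,A) ≤ (1/N) log Φ(t,A) ≤ (1/N) log Φ̃(t,A) + a²/(2t), where Φ(t,A) is the weighted matching polynomial (times √t if N is odd). -/
open MeasureTheory ProbabilityTheory Matrix

/-- Total weighted `k`-matching of the weighted graph encoded by the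
skew-symmetric matrix `A`. -/
noncomputable def phiW {N : ℕ} (A : Matrix (Fin N) (Fin N) ℝ) (k : ℕ) : ℝ :=
  ∑ M ∈ Finset.univ.filter
      (fun M : Finset (Fin N × Fin N) =>
        ((∀ p ∈ M, p.1 < p.2) ∧
          ∀ p ∈ M, ∀ q ∈ M, p ≠ q →
            p.1 ≠ q.1 ∧ p.1 ≠ q.2 ∧ p.2 ≠ q.1 ∧ p.2 ≠ q.2) ∧ M.card = k),
    ∏ p ∈ M, (A p.1 p.2) ^ 2

/-- The weighted matching polynomial `Φ(t, A)`. -/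
noncomputable def PhiW {N : ℕ} (A : Matrix (Fin N) (Fin N) ℝ) (t : ℝ) : ℝ :=
  ∑ k ∈ Finset.range (N / 2 + 1), phiW A k * t ^ (N / 2 - k)

/-- `Φ(t,A)`, multiplied by `√t` when `N` is odd. -/
noncomputable def PhiFull {N : ℕ} (A : Matrix (Fin N) (Fin N) ℝ) (t : ℝ) : ℝ :=
  (if Even N then 1 else Real.sqrt t) * PhiW A t

/-- Index type of the strictly upper-triangular positions. -/
abbrev PairIdx (N : ℕ) := {p : Fin N × Fin N // p.1 < p.2}

/-- The canonical product of standard Gaussian measures, one for each edge slot. -/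
noncomputable def gaussPi (N : ℕ) : Measure (PairIdx N → ℝ) :=
  Measure.pi fun _ => gaussianReal 0 1

/-- The sample `Y_A(ξ)` of the random skew-symmetric matrix `Y_A`. -/
noncomputable def sampleY {N : ℕ} (A : Matrix (Fin N) (Fin N) ℝ)
    (ξ : PairIdx N → ℝ) : Matrix (Fin N) (Fin N) ℝ :=
  Matrix.of fun i j =>
    if h : i < j then A i j * ξ ⟨(i, j), h⟩
    else if h : j < i then A i j * ξ ⟨(j, i), h⟩
    else 0

/-- `log Φ̃(t, A) = E log det(√t I_N + Y_A)` for i.i.d. standard Gaussian entries. -/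
noncomputable def logPhiTilde {N : ℕ} (t : ℝ) (A : Matrix (Fin N) (Fin N) ℝ) : ℝ :=
  ∫ ξ, Real.log ((Real.sqrt t • (1 : Matrix (Fin N) (Fin N) ℝ) + sampleY A ξ).det) ∂(gaussPi N)

/-- The constant `C₁ = -(1/√(2π)) ∫ log(x²) e^{-x²/2} dx`. -/
noncomputable def C1 : ℝ :=
  -(Real.sqrt (2 * Real.pi))⁻¹ * ∫ x : ℝ, Real.log (x ^ 2) * Real.exp (-x ^ 2 / 2)

/-!
In the Leibniz expansion of `E det (√t I + Y_A)` a permutation contributes only if it is an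
involution, since otherwise some Gaussian variable occurs exactly once in its term; involutions
correspond to matchings, so the expectation is the matching polynomial. The gap between `log E` and
`E log` is then controlled by Gaussian concentration of `F = log det (√t I + Y_A)`. The gradient of
`F` is read off the inverse `G` of `√t I + Y_A`, whose symmetric part `√t G Gᵀ` forces
`‖G - Gᵀ‖² ≤ N / t`, so `F` is Lipschitz with constant `L`, `L² = N a² / (2 t)`. For such an `F` and
independent standard Gaussian vectors `U`, `V`, integration by parts bounds the `θ`-derivative of
`E exp (F (cos θ U + sin θ V) - F U)` by `L² sin θ` times the expectation itself; between `θ = 0`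
and `θ = π / 2` this gives `E exp F * E exp (-F) ≤ exp (L²)`, and `E exp (-F) ≥ exp (-E F)` by
Jensen's inequality.
-/

section Gaussian

open scoped RealInnerProductSpace

lemma integrable_exp_mul_norm {F : Type*} [NormedAddCommGroup F] [NormedSpace ℝ F]
    [CompleteSpace F] [SecondCountableTopology F] [MeasurableSpace F] [BorelSpace F]
    (μ : Measure F) [IsGaussian μ] (c : ℝ) : Integrable (fun x => Real.exp (c * ‖x‖)) μ := by
  obtain ⟨C, hC, hint⟩ := IsGaussian.exists_integrable_exp_sq μ
  refine (hint.const_mul (Real.exp (c ^ 2 / (4 * C)))).mono' (by fun_prop) (.of_forall fun x => ?_)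
  rw [Real.norm_of_nonneg (Real.exp_nonneg _), ← Real.exp_add, Real.exp_le_exp]
  have amgm : c ^ 2 / (4 * C) + C * ‖x‖ ^ 2 - c * ‖x‖ = (c - 2 * C * ‖x‖) ^ 2 / (4 * C) := by
    field_simp
    ring
  have : 0 ≤ (c - 2 * C * ‖x‖) ^ 2 / (4 * C) := by positivity
  linarith

lemma integrable_of_abs_le_exp_mul_norm {F : Type*} [NormedAddCommGroup F] [NormedSpace ℝ F]
    [CompleteSpace F] [SecondCountableTopology F] [MeasurableSpace F] [BorelSpace F]
    {μ : Measure F} [IsGaussian μ] {g : F → ℝ} (hg : Continuous g) {C c : ℝ}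
    (h : ∀ x, |g x| ≤ C * Real.exp (c * ‖x‖)) : Integrable g μ :=
  ((integrable_exp_mul_norm μ c).const_mul C).mono' hg.aestronglyMeasurable (.of_forall h)

variable {E : Type*} [NormedAddCommGroup E] [InnerProductSpace ℝ E]

section Density

/-- The density of the standard Gaussian measure of `E` with respect to Lebesgue measure. -/
noncomputable def stdGaussianDensity (x : E) : ℝ :=
  (2 * Real.pi) ^ (-(Module.finrank ℝ E / 2) : ℝ) * Real.exp (-‖x‖ ^ 2 / 2)

lemma stdGaussianDensity_nonneg (x : E) : 0 ≤ stdGaussianDensity x := by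
  unfold stdGaussianDensity
  positivity

@[fun_prop]
lemma continuous_stdGaussianDensity : Continuous (stdGaussianDensity : E → ℝ) := by
  unfold stdGaussianDensity
  fun_prop

lemma hasFDerivAt_stdGaussianDensity (x : E) :
    HasFDerivAt stdGaussianDensity (-stdGaussianDensity x • innerSL ℝ x) x := by
  have h : HasFDerivAt (fun y : E => -‖y‖ ^ 2 / 2) (-innerSL ℝ x) x := by
    convert! (hasStrictFDerivAt_norm_sq x).hasFDerivAt.const_mul (-2⁻¹ : ℝ) using 1
    · ext y
      ring
    · ext y
      simp
  convert! h.exp.const_mul ((2 * Real.pi) ^ (-(Module.finrank ℝ E / 2) : ℝ)) using 1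
  simp [stdGaussianDensity, smul_smul]

variable [FiniteDimensional ℝ E] [MeasurableSpace E] [BorelSpace E]

lemma integrable_stdGaussianDensity : Integrable (stdGaussianDensity : E → ℝ) := by
  have h := (GaussianFourier.integrable_cexp_neg_mul_sq_norm_add (b := 1 / 2) (by norm_num) 0
    (0 : E)).norm
  refine (h.const_mul ((2 * Real.pi) ^ (-(Module.finrank ℝ E / 2) : ℝ))).congr
    (.of_forall fun x => ?_)
  simp only [stdGaussianDensity, Complex.norm_exp]
  simp [div_eq_inv_mul, ← Complex.ofReal_pow]

lemma stdGaussian_eq_withDensity :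
    stdGaussian E = volume.withDensity fun x => ENNReal.ofReal (stdGaussianDensity x) := by
  have := isFiniteMeasure_withDensity_ofReal (integrable_stdGaussianDensity (E := E)).2
  refine Measure.ext_of_charFun (funext fun t => ?_)
  have hconst : ((2 * Real.pi : ℂ) ^ (-(Module.finrank ℝ E / 2) : ℂ)) *
      (Real.pi / (1 / 2)) ^ (Module.finrank ℝ E / 2 : ℂ) = 1 := by
    rw [div_div_eq_mul_div, div_one, mul_comm (Real.pi : ℂ) 2,
      ← Complex.cpow_add _ _ (by simp [Real.pi_ne_zero]), neg_add_cancel, Complex.cpow_zero]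
  calc charFun (stdGaussian E) t = Complex.exp (Complex.I ^ 2 * ‖t‖ ^ 2 / (4 * (1 / 2))) := by
        rw [charFun_stdGaussian, Complex.I_sq]
        ring_nf
    _ = (2 * Real.pi : ℂ) ^ (-(Module.finrank ℝ E / 2) : ℂ) *
          ∫ x : E, Complex.exp (-(1 / 2) * ‖x‖ ^ 2 + Complex.I * ⟪t, x⟫) := by
        rw [GaussianFourier.integral_cexp_neg_mul_sq_norm_add (by norm_num), ← mul_assoc, hconst,
          one_mul]
    _ = ∫ x : E, stdGaussianDensity x • Complex.exp (⟪x, t⟫ * Complex.I) := by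
        rw [← integral_const_mul]
        congr with x
        rw [stdGaussianDensity, Complex.real_smul, Complex.ofReal_mul, mul_assoc,
          Complex.ofReal_exp, ← Complex.exp_add, Complex.ofReal_cpow (by positivity),
          real_inner_comm]
        push_cast
        ring_nf
    _ = charFun (volume.withDensity fun x => ENNReal.ofReal (stdGaussianDensity x)) t := by
        rw [charFun_apply, integral_withDensity_eq_integral_toReal_smul (by fun_prop) (by simp)]
        simp [stdGaussianDensity_nonneg]

lemma integral_stdGaussian_eq (g : E → ℝ) :
    ∫ x, g x ∂(stdGaussian E) = ∫ x, stdGaussianDensity x * g x := by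
  rw [stdGaussian_eq_withDensity, integral_withDensity_eq_integral_toReal_smul
    (by fun_prop) (by simp)]
  simp [stdGaussianDensity_nonneg]

lemma integrable_stdGaussian_iff {g : E → ℝ} :
    Integrable g (stdGaussian E) ↔ Integrable fun x => stdGaussianDensity x * g x := by
  rw [stdGaussian_eq_withDensity, integrable_withDensity_iff_integrable_smul'
    (by fun_prop) (by simp)]
  simp [stdGaussianDensity_nonneg]

lemma integral_inner_mul_stdGaussian {g : E → ℝ} (hg : Differentiable ℝ g) (v : E)
    (hint : Integrable g (stdGaussian E))
    (hint_inner : Integrable (fun x => ⟪v, x⟫ * g x) (stdGaussian E))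
    (hint_fderiv : Integrable (fun x => fderiv ℝ g x v) (stdGaussian E)) :
    ∫ x, ⟪v, x⟫ * g x ∂(stdGaussian E) = ∫ x, fderiv ℝ g x v ∂(stdGaussian E) := by
  have hfderiv (x : E) : fderiv ℝ stdGaussianDensity x v = -(stdGaussianDensity x * ⟪v, x⟫) := by
    simp [(hasFDerivAt_stdGaussianDensity x).fderiv, real_inner_comm]
  rw [integrable_stdGaussian_iff] at hint hint_inner hint_fderiv
  simp only [integral_stdGaussian_eq]
  rw [integral_mul_fderiv_eq_neg_fderiv_mul_of_integrable _ hint_fderiv hint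
    (fun x _ => (hasFDerivAt_stdGaussianDensity x).differentiableAt) (fun x _ => hg x)]
  · simp only [hfderiv, neg_mul, integral_neg, neg_neg, mul_assoc]
  · simpa only [hfderiv, neg_mul, mul_assoc] using! hint_inner.neg

end Density

section ExpGrowth

variable {F : Type*} [SeminormedAddCommGroup F]

lemma norm_mul_exp_le (x : F) (c : ℝ) :
    ‖x‖ * Real.exp (c * ‖x‖) ≤ Real.exp ((c + 1) * ‖x‖) := by
  rw [add_mul, one_mul, add_comm, Real.exp_add]
  gcongr
  linarith [Real.add_one_le_exp ‖x‖]

lemma exp_le_of_lipschitz {f : F → ℝ} {L : NNReal} (hL : LipschitzWith L f) (x : F) :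
    Real.exp (f x) ≤ Real.exp (f 0) * Real.exp (L * ‖x‖) := by
  rw [← Real.exp_add, Real.exp_le_exp]
  have h := hL.norm_sub_le x 0
  rw [sub_zero, Real.norm_eq_abs] at h
  linarith [le_abs_self (f x - f 0)]

end ExpGrowth

section Rotation

variable {F : Type*} [NormedAddCommGroup F] [NormedSpace ℝ F]

lemma norm_rotation_le (θ : ℝ) (z : F × F) :
    ‖ContinuousLinearMap.rotation θ z‖ ≤ 2 * ‖z‖ := by
  have hc := Real.abs_cos_le_one θ
  have hs := Real.abs_sin_le_one θ
  have h₁ := norm_fst_le z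
  have h₂ := norm_snd_le z
  rw [ContinuousLinearMap.rotation_apply]
  refine norm_prod_le_iff.2 ⟨(norm_add_le _ _).trans ?_, (norm_add_le _ _).trans ?_⟩ <;>
  · simp only [norm_smul, norm_neg, Real.norm_eq_abs]
    nlinarith [norm_nonneg z, norm_nonneg z.1, norm_nonneg z.2]

lemma rotation_neg_rotation (θ : ℝ) (z : F × F) :
    ContinuousLinearMap.rotation (-θ) (ContinuousLinearMap.rotation θ z) = z := by
  have hθ := Real.sin_sq_add_cos_sq θ
  simp only [ContinuousLinearMap.rotation_apply, Real.cos_neg, Real.sin_neg]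
  ext
  · dsimp
    match_scalars
    · linear_combination hθ
    · ring
  · dsimp
    match_scalars
    · ring
    · linear_combination hθ

lemma hasDerivAt_rotation_fst (θ : ℝ) (z : F × F) :
    HasDerivAt (fun θ => (ContinuousLinearMap.rotation θ z).1)
      (ContinuousLinearMap.rotation θ z).2 θ :=
  ((Real.hasDerivAt_cos θ).smul_const z.1).add ((Real.hasDerivAt_sin θ).smul_const z.2)

lemma abs_sub_rotation_fst_le {f : F → ℝ} {L : NNReal} (hL : LipschitzWith L f) (θ : ℝ)
    (z : F × F) : |f (ContinuousLinearMap.rotation θ z).1 - f z.1| ≤ 3 * L * ‖z‖ := by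
  have hdist : ‖(ContinuousLinearMap.rotation θ z).1 - z.1‖ ≤ 3 * ‖z‖ := by
    linarith [norm_sub_le (ContinuousLinearMap.rotation θ z).1 z.1, norm_fst_le z,
      norm_fst_le (ContinuousLinearMap.rotation θ z), norm_rotation_le θ z]
  calc _ ≤ L * ‖(ContinuousLinearMap.rotation θ z).1 - z.1‖ := hL.norm_sub_le _ _
    _ ≤ L * (3 * ‖z‖) := by gcongr
    _ = 3 * L * ‖z‖ := by ring

lemma abs_fderiv_apply_le_of_lipschitz {f : F → ℝ} {L : NNReal} (hL : LipschitzWith L f)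
    (x v : F) : |fderiv ℝ f x v| ≤ L * ‖v‖ :=
  (fderiv ℝ f x).le_of_opNorm_le (norm_fderiv_le_of_lipschitz ℝ hL) v

lemma norm_fderiv_mul_exp_le {f : F → ℝ} {L : NNReal} (hL : LipschitzWith L f) {x v : F}
    {z : F × F} {a : ℝ} (hv : ‖v‖ ≤ 2 * ‖z‖) (ha : a ≤ 3 * L * ‖z‖) :
    ‖fderiv ℝ f x v * Real.exp a‖ ≤ 2 * L * Real.exp ((3 * L + 1) * ‖z‖) := by
  rw [norm_mul, Real.norm_eq_abs, Real.norm_eq_abs, Real.abs_exp]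
  calc _ ≤ L * (2 * ‖z‖) * Real.exp (3 * L * ‖z‖) := by
        gcongr
        exact (abs_fderiv_apply_le_of_lipschitz hL _ _).trans (by gcongr)
    _ = 2 * L * (‖z‖ * Real.exp (3 * L * ‖z‖)) := by ring
    _ ≤ 2 * L * Real.exp ((3 * L + 1) * ‖z‖) := by
        gcongr
        exact norm_mul_exp_le z _

lemma lipschitzWith_sub_rotation_neg {f : F → ℝ} {L : NNReal} (hL : LipschitzWith L f) (θ : ℝ)
    (w : F) :
    LipschitzWith (L * Real.nnabs (Real.sin θ))
      fun x => f w - f (ContinuousLinearMap.rotation (-θ) (w, x)).1 := by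
  refine LipschitzWith.of_dist_le_mul fun x y => ?_
  rw [dist_sub_left]
  refine (hL.dist_le_mul _ _).trans_eq ?_
  simp [ContinuousLinearMap.rotation_apply, dist_neg_neg, dist_smul₀, mul_assoc]

end Rotation

section Interpolation

variable {E : Type*} [NormedAddCommGroup E] [InnerProductSpace ℝ E] [FiniteDimensional ℝ E]
  [MeasurableSpace E] [BorelSpace E] {f : E → ℝ} {L : NNReal}

lemma integrable_exp_of_lipschitz (hL : LipschitzWith L f) :
    Integrable (fun x => Real.exp (f x)) (stdGaussian E) := by
  have := hL.continuous
  refine integrable_of_abs_le_exp_mul_norm (C := Real.exp (f 0)) (c := L) (by fun_prop) fun x => ?_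
  rw [Real.abs_exp]
  exact exp_le_of_lipschitz hL x

lemma integrable_inner_mul_exp_of_lipschitz (hL : LipschitzWith L f) (v : E) :
    Integrable (fun x => ⟪v, x⟫ * Real.exp (f x)) (stdGaussian E) := by
  have := hL.continuous
  refine integrable_of_abs_le_exp_mul_norm (C := ‖v‖ * Real.exp (f 0)) (c := L + 1) (by fun_prop)
    fun x => ?_
  rw [abs_mul, Real.abs_exp]
  calc |⟪v, x⟫| * Real.exp (f x) ≤ ‖v‖ * ‖x‖ * (Real.exp (f 0) * Real.exp (L * ‖x‖)) := by
        gcongr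
        · exact abs_real_inner_le_norm v x
        · exact exp_le_of_lipschitz hL x
    _ = ‖v‖ * Real.exp (f 0) * (‖x‖ * Real.exp (L * ‖x‖)) := by ring
    _ ≤ ‖v‖ * Real.exp (f 0) * Real.exp ((L + 1) * ‖x‖) := by
        gcongr
        exact norm_mul_exp_le x _

lemma integral_dual_mul_exp_le (hf : ContDiff ℝ 1 f) (hL : LipschitzWith L f)
    (ℓ : StrongDual ℝ E) :
    ∫ x, ℓ x * Real.exp (f x) ∂(stdGaussian E) ≤
      ‖ℓ‖ * L * ∫ x, Real.exp (f x) ∂(stdGaussian E) := by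
  have hdiff := hf.differentiable one_ne_zero
  set v := (InnerProductSpace.toDual ℝ E).symm ℓ with hv
  have hℓ (x : E) : ℓ x = ⟪v, x⟫ := (InnerProductSpace.toDual_symm_apply).symm
  have hfderiv (x : E) :
      fderiv ℝ (fun x => Real.exp (f x)) x v = Real.exp (f x) * fderiv ℝ f x v := by
    simp [fderiv_exp (hdiff x)]
  have hbound (x : E) : |fderiv ℝ f x v| ≤ ‖ℓ‖ * L := by
    have h := abs_fderiv_apply_le_of_lipschitz hL x v
    rwa [hv, LinearIsometryEquiv.norm_map, mul_comm] at h
  have hexp := integrable_exp_of_lipschitz hL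
  have hint_fderiv :
      Integrable (fun x => Real.exp (f x) * fderiv ℝ f x v) (stdGaussian E) :=
    hexp.mul_bdd (by fun_prop) (.of_forall hbound)
  calc _ = ∫ x, Real.exp (f x) * fderiv ℝ f x v ∂(stdGaussian E) := by
        simp only [hℓ, ← hfderiv]
        exact integral_inner_mul_stdGaussian (by fun_prop) v hexp
          (integrable_inner_mul_exp_of_lipschitz hL v)
          (by simpa only [hfderiv] using hint_fderiv)
    _ ≤ ∫ x, ‖ℓ‖ * L * Real.exp (f x) ∂(stdGaussian E) := by
        refine integral_mono hint_fderiv (hexp.const_mul _) fun x => ?_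
        rw [mul_comm]
        exact mul_le_mul_of_nonneg_right ((le_abs_self _).trans (hbound x)) (Real.exp_nonneg _)
    _ = _ := integral_const_mul _ _

/-- The interpolation `h θ = E exp (f (cos θ U + sin θ V) - f U)`, for independent standard Gaussian
vectors `U` and `V`. -/
noncomputable def expInterpolation (f : E → ℝ) (θ : ℝ) : ℝ :=
  ∫ z, Real.exp (f (ContinuousLinearMap.rotation θ z).1 - f z.1)
    ∂((stdGaussian E).prod (stdGaussian E))

lemma hasDerivAt_expInterpolation (hf : ContDiff ℝ 1 f) (hL : LipschitzWith L f) (θ : ℝ) :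
    HasDerivAt (expInterpolation f)
      (∫ z, fderiv ℝ f (ContinuousLinearMap.rotation θ z).1 (ContinuousLinearMap.rotation θ z).2 *
        Real.exp (f (ContinuousLinearMap.rotation θ z).1 - f z.1)
        ∂((stdGaussian E).prod (stdGaussian E))) θ := by
  refine (hasDerivAt_integral_of_dominated_loc_of_deriv_le
    (F := fun θ z => Real.exp (f (ContinuousLinearMap.rotation θ z).1 - f z.1))
    (F' := fun θ z => fderiv ℝ f (ContinuousLinearMap.rotation θ z).1
      (ContinuousLinearMap.rotation θ z).2 *
        Real.exp (f (ContinuousLinearMap.rotation θ z).1 - f z.1))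
    (s := Set.univ) Filter.univ_mem (.of_forall fun θ => by fun_prop) ?_ (by fun_prop)
    (.of_forall fun z θ _ => norm_fderiv_mul_exp_le hL
      ((norm_snd_le _).trans (norm_rotation_le θ z))
      ((le_abs_self _).trans (abs_sub_rotation_fst_le hL θ z)))
    ((integrable_exp_mul_norm _ _).const_mul _) (.of_forall fun z θ _ => ?_)).2
  · refine integrable_of_abs_le_exp_mul_norm (C := 1) (c := 3 * L) (by fun_prop) fun z => ?_
    rw [Real.abs_exp, one_mul, Real.exp_le_exp]
    exact (le_abs_self _).trans (abs_sub_rotation_fst_le hL θ z)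
  · have h := ((hf.differentiable one_ne_zero _).hasFDerivAt.comp_hasDerivAt θ
      (hasDerivAt_rotation_fst θ z)).sub_const (f z.1)
    exact h.exp.congr_deriv (mul_comm _ _)

lemma integral_comp_rotation {G : E × E → ℝ} (hG : Continuous G) (θ : ℝ) :
    ∫ z, G (ContinuousLinearMap.rotation θ z) ∂((stdGaussian E).prod (stdGaussian E)) =
      ∫ z, G z ∂((stdGaussian E).prod (stdGaussian E)) := by
  conv_rhs => rw [← IsGaussian.map_rotation_eq_self (μ := stdGaussian E) integral_id_stdGaussian θ]
  exact (integral_map (by fun_prop) hG.aestronglyMeasurable).symm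

-- The rotation by `θ` makes `w = cos θ U + sin θ V` and `x = -sin θ U + cos θ V` independent
-- standard Gaussians; for fixed `w`, integrate by parts in `x`.
lemma deriv_expInterpolation_le (hf : ContDiff ℝ 1 f) (hL : LipschitzWith L f) {θ : ℝ}
    (hθ : 0 ≤ Real.sin θ) :
    deriv (expInterpolation f) θ ≤ L ^ 2 * Real.sin θ * expInterpolation f θ := by
  let φ (z : E × E) : ℝ := f z.1 - f (ContinuousLinearMap.rotation (-θ) z).1
  have hφ_cont : Continuous φ := by fun_prop
  have hφ_le (z : E × E) : φ z ≤ 3 * L * ‖z‖ := by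
    have h := abs_sub_rotation_fst_le hL (-θ) z
    rw [abs_sub_comm] at h
    exact (le_abs_self _).trans h
  have hφ_rot (z : E × E) : f (ContinuousLinearMap.rotation θ z).1 - f z.1 =
      φ (ContinuousLinearMap.rotation θ z) := by
    simp only [φ, rotation_neg_rotation]
  have hint : Integrable (fun z => Real.exp (φ z)) ((stdGaussian E).prod (stdGaussian E)) :=
    integrable_of_abs_le_exp_mul_norm (C := 1) (c := 3 * L) (by fun_prop) fun z => by
      simpa using hφ_le z
  have hint' : Integrable (fun z => fderiv ℝ f z.1 z.2 * Real.exp (φ z))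
      ((stdGaussian E).prod (stdGaussian E)) :=
    integrable_of_abs_le_exp_mul_norm (by fun_prop) fun z =>
      norm_fderiv_mul_exp_le hL (by linarith [norm_snd_le z, norm_nonneg z]) (hφ_le z)
  rw [(hasDerivAt_expInterpolation hf hL θ).deriv]
  simp only [expInterpolation, hφ_rot]
  rw [integral_comp_rotation (G := fun z => fderiv ℝ f z.1 z.2 * Real.exp (φ z)) (by fun_prop),
    integral_comp_rotation (G := fun z => Real.exp (φ z)) (by fun_prop),
    integral_prod _ hint, integral_prod _ hint', ← integral_const_mul]
  refine integral_mono hint'.integral_prod_left (hint.integral_prod_left.const_mul _) fun w => ?_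
  calc _ ≤ ‖fderiv ℝ f w‖ * (L * Real.nnabs (Real.sin θ) : NNReal) *
          ∫ x, Real.exp (φ (w, x)) ∂(stdGaussian E) :=
        integral_dual_mul_exp_le (by fun_prop) (lipschitzWith_sub_rotation_neg hL θ w) _
    _ ≤ L * (L * Real.sin θ) * ∫ x, Real.exp (φ (w, x)) ∂(stdGaussian E) := by
        rw [NNReal.coe_mul, Real.coe_nnabs, abs_of_nonneg hθ]
        gcongr
        exact norm_fderiv_le_of_lipschitz ℝ hL
    _ = _ := by ring

lemma expInterpolation_zero : expInterpolation f 0 = 1 := by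
  simp [expInterpolation, ContinuousLinearMap.rotation_apply]

lemma expInterpolation_pi_div_two :
    expInterpolation f (Real.pi / 2) =
      (∫ x, Real.exp (f x) ∂(stdGaussian E)) * ∫ x, Real.exp (-f x) ∂(stdGaussian E) := by
  rw [mul_comm, ← integral_prod_mul]
  simp [expInterpolation, ContinuousLinearMap.rotation_apply, ← Real.exp_add, neg_add_eq_sub]

lemma integral_exp_mul_integral_exp_neg_le (hf : ContDiff ℝ 1 f) (hL : LipschitzWith L f) :
    (∫ x, Real.exp (f x) ∂(stdGaussian E)) * ∫ x, Real.exp (-f x) ∂(stdGaussian E) ≤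
      Real.exp (L ^ 2) := by
  have hderiv (θ : ℝ) := (hasDerivAt_expInterpolation hf hL θ).mul
    ((Real.hasDerivAt_cos θ).const_mul ((L : ℝ) ^ 2)).exp
  have hanti : AntitoneOn (fun θ => expInterpolation f θ * Real.exp (L ^ 2 * Real.cos θ))
      (Set.Icc 0 (Real.pi / 2)) := by
    refine antitoneOn_of_deriv_nonpos (convex_Icc _ _)
      (fun θ _ => (hderiv θ).continuousAt.continuousWithinAt)
      (fun θ _ => (hderiv θ).differentiableAt.differentiableWithinAt) fun θ hθ => ?_
    rw [interior_Icc] at hθ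
    have hsin : 0 ≤ Real.sin θ :=
      Real.sin_nonneg_of_nonneg_of_le_pi hθ.1.le (by linarith [hθ.2, Real.pi_pos])
    have h := mul_le_mul_of_nonneg_right (deriv_expInterpolation_le hf hL hsin)
      (Real.exp_nonneg (L ^ 2 * Real.cos θ))
    rw [(hasDerivAt_expInterpolation hf hL θ).deriv] at h
    exact (hderiv θ).deriv.trans_le (by linarith)
  have hpi := Real.pi_div_two_pos.le
  simpa [expInterpolation_zero, expInterpolation_pi_div_two] using
    hanti (Set.left_mem_Icc.2 hpi) (Set.right_mem_Icc.2 hpi) hpi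

lemma integrable_of_lipschitz (hL : LipschitzWith L f) : Integrable f (stdGaussian E) := by
  refine ((integrable_exp_of_lipschitz hL).add (integrable_exp_of_lipschitz hL.neg)).mono'
    hL.continuous.aestronglyMeasurable (.of_forall fun x => ?_)
  have h : |f x| ≤ Real.exp (f x) + Real.exp (-f x) := abs_le'.2
    ⟨by linarith [Real.add_one_le_exp (f x), Real.exp_nonneg (-f x)],
      by linarith [Real.add_one_le_exp (-f x), Real.exp_nonneg (f x)]⟩
  exact h

lemma integral_le_log_integral_exp (hL : LipschitzWith L f) :
    ∫ x, f x ∂(stdGaussian E) ≤ Real.log (∫ x, Real.exp (f x) ∂(stdGaussian E)) := by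
  have hexp := integrable_exp_of_lipschitz hL
  rw [Real.le_log_iff_exp_le (integral_exp_pos hexp)]
  exact convexOn_exp.map_integral_le Real.continuous_exp.continuousOn isClosed_univ (by simp)
    (integrable_of_lipschitz hL) hexp

lemma log_integral_exp_le (hf : ContDiff ℝ 1 f) (hL : LipschitzWith L f) :
    Real.log (∫ x, Real.exp (f x) ∂(stdGaussian E)) ≤ ∫ x, f x ∂(stdGaussian E) + L ^ 2 := by
  have hL_neg : LipschitzWith L fun x => -f x := hL.neg
  have hpos := integral_exp_pos (integrable_exp_of_lipschitz hL)
  have hpos_neg := integral_exp_pos (integrable_exp_of_lipschitz hL_neg)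
  have hlog := Real.log_le_log (by positivity) (integral_exp_mul_integral_exp_neg_le hf hL)
  rw [Real.log_mul hpos.ne' hpos_neg.ne', Real.log_exp] at hlog
  have hjensen := integral_le_log_integral_exp hL_neg
  rw [integral_neg] at hjensen
  linarith

end Interpolation

end Gaussian

section SkewResolvent

variable {n : Type*} [Fintype n]

lemma dotProduct_mulVec_self_of_skew {Y : Matrix n n ℝ} (hY : Yᵀ = -Y) (w : n → ℝ) :
    w ⬝ᵥ Y *ᵥ w = 0 := by
  have h : w ⬝ᵥ Y *ᵥ w = -(w ⬝ᵥ Y *ᵥ w) := by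
    conv_lhs => rw [dotProduct_mulVec, ← mulVec_transpose, hY, neg_mulVec, neg_dotProduct,
      dotProduct_comm]
  linarith

lemma sum_sq_sub_transpose (G : Matrix n n ℝ) :
    ∑ i, ∑ j, (G i j - G j i) ^ 2 =
      4 * ∑ i, ∑ j, G i j ^ 2 - ∑ i, ∑ j, (G i j + G j i) ^ 2 := by
  have hswap : ∑ i, ∑ j, G j i ^ 2 = ∑ i, ∑ j, G i j ^ 2 := Finset.sum_comm
  have hsq (i j : n) :
      (G i j - G j i) ^ 2 = 2 * G i j ^ 2 + 2 * G j i ^ 2 - (G i j + G j i) ^ 2 := by ring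
  simp only [hsq, Finset.sum_sub_distrib, Finset.sum_add_distrib, ← Finset.mul_sum, hswap]
  ring

lemma sum_sq_diag_le (G : Matrix n n ℝ) :
    ∑ i, 4 * G i i ^ 2 ≤ ∑ i, ∑ j, (G i j + G j i) ^ 2 := by
  refine Finset.sum_le_sum fun i _ => ?_
  calc 4 * G i i ^ 2 = (G i i + G i i) ^ 2 := by ring
    _ ≤ ∑ j, (G i j + G j i) ^ 2 :=
      Finset.single_le_sum (f := fun j => (G i j + G j i) ^ 2) (fun _ _ => sq_nonneg _)
        (Finset.mem_univ i)

lemma four_mul_sq_trace_mul_le (G : Matrix n n ℝ) {B : Matrix n n ℝ} (hB : Bᵀ = -B) :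
    4 * (G * B).trace ^ 2 ≤ (∑ i, ∑ j, (G i j - G j i) ^ 2) * ∑ i, ∑ j, B i j ^ 2 := by
  have hskew (i j : n) : B j i = -B i j := congrFun₂ hB i j
  have htrace : 2 * (G * B).trace = ∑ i, ∑ j, (G j i - G i j) * B i j := by
    have hrow : (G * B).trace = ∑ i, ∑ j, G i j * B j i := by simp [trace, mul_apply]
    have hcol : (G * B).trace = ∑ i, ∑ j, G j i * B i j := hrow.trans Finset.sum_comm
    rw [two_mul]
    nth_rw 1 [hcol]
    rw [hrow]
    simp only [← Finset.sum_add_distrib]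
    exact Finset.sum_congr rfl fun i _ => Finset.sum_congr rfl fun j _ => by rw [hskew i j]; ring
  calc 4 * (G * B).trace ^ 2 = (∑ i, ∑ j, (G j i - G i j) * B i j) ^ 2 := by rw [← htrace]; ring
    _ ≤ (∑ i, ∑ j, (G j i - G i j) ^ 2) * ∑ i, ∑ j, B i j ^ 2 := by
      simp only [← Fintype.sum_prod_type']
      exact Finset.sum_mul_sq_le_sq_mul_sq _ _ _
    _ = (∑ i, ∑ j, (G i j - G j i) ^ 2) * ∑ i, ∑ j, B i j ^ 2 := by rw [Finset.sum_comm]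

variable [DecidableEq n] {Y : Matrix n n ℝ} {s : ℝ}

lemma det_smul_one_add_ne_zero (hY : Yᵀ = -Y) (hs : s ≠ 0) : (s • 1 + Y).det ≠ 0 := by
  intro h
  obtain ⟨w, hw, hker⟩ := exists_mulVec_eq_zero_iff.2 h
  have hquad : s * (w ⬝ᵥ w) = 0 := by
    simpa [add_mulVec, smul_mulVec, dotProduct_mulVec_self_of_skew hY]
      using congrArg (w ⬝ᵥ ·) hker
  exact hw (dotProduct_self_eq_zero.1 ((mul_eq_zero.1 hquad).resolve_left hs))

-- The determinant is positive at `s • 1` and has no zero on the segment to `s • 1 + Y`.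
lemma det_smul_one_add_pos (hY : Yᵀ = -Y) (hs : 0 < s) : 0 < (s • 1 + Y).det := by
  by_contra! hle
  have hcont : Continuous fun r : ℝ => (s • 1 + r • Y).det := by fun_prop
  obtain ⟨r, hr⟩ := mem_range_of_exists_le_of_exists_ge hcont (c := 0)
    ⟨1, by simpa using hle⟩ ⟨0, by simp [hs.le]⟩
  exact det_smul_one_add_ne_zero (by simp [hY]) hs.ne' hr

lemma inv_add_transpose_inv (hY : Yᵀ = -Y) (hs : s ≠ 0) :
    (s • 1 + Y)⁻¹ + (s • 1 + Y)⁻¹ᵀ = (2 * s) • ((s • 1 + Y)⁻¹ * (s • 1 + Y)⁻¹ᵀ) := by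
  set M := s • 1 + Y with hM
  have hu : IsUnit M.det := (det_smul_one_add_ne_zero hY hs).isUnit
  have hsymm : M + Mᵀ = (2 * s) • 1 := by
    simp only [hM, transpose_add, transpose_smul, transpose_one, hY, two_mul, add_smul]
    abel
  calc M⁻¹ + M⁻¹ᵀ = M⁻¹ * (M + Mᵀ) * M⁻¹ᵀ := by
        rw [mul_add, add_mul, nonsing_inv_mul _ hu, one_mul, mul_assoc, transpose_nonsing_inv,
          mul_nonsing_inv _ (by rwa [det_transpose]), mul_one, add_comm]
    _ = (2 * s) • (M⁻¹ * M⁻¹ᵀ) := by simp [hsymm]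

lemma inv_apply_self_eq (hY : Yᵀ = -Y) (hs : s ≠ 0) (i : n) :
    (s • 1 + Y)⁻¹ i i = s * ∑ j, (s • 1 + Y)⁻¹ i j ^ 2 := by
  have h := congrFun₂ (inv_add_transpose_inv hY hs) i i
  simp only [Matrix.add_apply, transpose_apply, Matrix.smul_apply, mul_apply, smul_eq_mul,
    ← pow_two] at h
  linarith

lemma sum_sq_inv_sub_transpose_le (hY : Yᵀ = -Y) (hs : s ≠ 0) :
    ∑ i, ∑ j, ((s • 1 + Y)⁻¹ i j - (s • 1 + Y)⁻¹ j i) ^ 2 ≤ Fintype.card n / s ^ 2 := by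
  set G := (s • 1 + Y)⁻¹ with hG
  have hrow (i : n) : ∑ j, G i j ^ 2 = G i i / s := by
    rw [hG, inv_apply_self_eq hY hs i]
    field_simp
  have hdiag (i : n) : 4 * (G i i / s) - 4 * G i i ^ 2 ≤ 1 / s ^ 2 := by
    have hsquare : 1 / s ^ 2 - (4 * (G i i / s) - 4 * G i i ^ 2) = (2 * G i i - 1 / s) ^ 2 := by
      field_simp
      ring
    nlinarith [sq_nonneg (2 * G i i - 1 / s)]
  calc ∑ i, ∑ j, (G i j - G j i) ^ 2
      = 4 * ∑ i, G i i / s - ∑ i, ∑ j, (G i j + G j i) ^ 2 := by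
        simp only [sum_sq_sub_transpose, hrow]
    _ ≤ 4 * ∑ i, G i i / s - ∑ i, 4 * G i i ^ 2 :=
        sub_le_sub_left (sum_sq_diag_le G) _
    _ = ∑ i, (4 * (G i i / s) - 4 * G i i ^ 2) := by rw [Finset.sum_sub_distrib, Finset.mul_sum]
    _ ≤ ∑ _i : n, 1 / s ^ 2 := Finset.sum_le_sum fun i _ => hdiag i
    _ = Fintype.card n / s ^ 2 := by simp [div_eq_mul_inv]

lemma sq_trace_inv_mul_le (hY : Yᵀ = -Y) (hs : s ≠ 0) {B : Matrix n n ℝ} (hB : Bᵀ = -B) :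
    ((s • 1 + Y)⁻¹ * B).trace ^ 2 ≤ Fintype.card n / (4 * s ^ 2) * ∑ i, ∑ j, B i j ^ 2 := by
  have h : 4 * ((s • 1 + Y)⁻¹ * B).trace ^ 2 ≤
      Fintype.card n / s ^ 2 * ∑ i, ∑ j, B i j ^ 2 :=
    (four_mul_sq_trace_mul_le _ hB).trans <| mul_le_mul_of_nonneg_right
      (sum_sq_inv_sub_transpose_le hY hs)
      (Finset.sum_nonneg fun i _ => Finset.sum_nonneg fun j _ => sq_nonneg _)
  have hscale : (Fintype.card n : ℝ) / (4 * s ^ 2) = Fintype.card n / s ^ 2 / 4 := by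
    field_simp
  rw [hscale, div_mul_eq_mul_div]
  linarith

end SkewResolvent

section LogDet

variable {n : Type*} [Fintype n] [DecidableEq n]

lemma hasDerivAt_det_add_smul {M : Matrix n n ℝ} (hM : IsUnit M.det) (B : Matrix n n ℝ) :
    HasDerivAt (fun r : ℝ => (M + r • B).det) (M.det * (M⁻¹ * B).trace) 0 := by
  obtain ⟨q, hq⟩ : ∃ q : Polynomial ℝ, ∀ r : ℝ,
      (1 + r • (M⁻¹ * B)).det = 1 + (M⁻¹ * B).trace * r + q.eval r * r ^ 2 :=
    ⟨_, fun r => det_one_add_smul r _⟩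
  have hfactor (r : ℝ) : (M + r • B).det =
      M.det * (1 + (M⁻¹ * B).trace * r + q.eval r * r ^ 2) := by
    rw [← hq, ← det_mul, mul_add, mul_one, Matrix.mul_smul, mul_nonsing_inv_cancel_left _ _ hM]
  simp only [hfactor]
  refine (((((hasDerivAt_id (0 : ℝ)).const_mul (M⁻¹ * B).trace).const_add 1).add
    ((q.hasDerivAt 0).mul ((hasDerivAt_id (0 : ℝ)).pow 2))).const_mul M.det).congr_deriv ?_
  simp

variable {V : Type*} [NormedAddCommGroup V] [NormedSpace ℝ V] [FiniteDimensional ℝ V]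
  (Y : V →ₗ[ℝ] Matrix n n ℝ)

lemma contDiff_det_add_linearMap (M : Matrix n n ℝ) {k : WithTop ℕ∞} :
    ContDiff ℝ k fun v => (M + Y v).det := by
  have hentry (i j : n) : ContDiff ℝ k fun v => Y v i j :=
    (LinearMap.toContinuousLinearMap (entryLinearMap ℝ ℝ i j ∘ₗ Y)).contDiff
  simp only [det_apply', Matrix.add_apply]
  exact ContDiff.sum fun σ _ => contDiff_const.mul <| contDiff_prod fun i _ =>
    contDiff_const.add (hentry _ _)

variable {Y} {s : ℝ}

lemma contDiff_log_det_smul_one_add (hY : ∀ v, (Y v)ᵀ = -Y v) (hs : s ≠ 0) {k : WithTop ℕ∞} :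
    ContDiff ℝ k fun v => Real.log (s • 1 + Y v).det :=
  (contDiff_det_add_linearMap Y _).log fun v => det_smul_one_add_ne_zero (hY v) hs

lemma fderiv_log_det_smul_one_add (hY : ∀ v, (Y v)ᵀ = -Y v) (hs : s ≠ 0) (v u : V) :
    fderiv ℝ (fun v => Real.log (s • 1 + Y v).det) v u = ((s • 1 + Y v)⁻¹ * Y u).trace := by
  have hdet : (s • 1 + Y v).det ≠ 0 := det_smul_one_add_ne_zero (hY v) hs
  have hdiff := (contDiff_log_det_smul_one_add hY hs (k := 1)).differentiable one_ne_zero v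
  have hline : HasLineDerivAt ℝ (fun v => Real.log (s • 1 + Y v).det)
      ((s • 1 + Y v)⁻¹ * Y u).trace v u := by
    have hlog := (hasDerivAt_det_add_smul hdet.isUnit (Y u)).log (by simpa using hdet)
    simpa [HasLineDerivAt, add_assoc, mul_div_cancel_left₀ _ hdet] using hlog
  exact (hdiff.hasFDerivAt.hasLineDerivAt u).lineDeriv.symm.trans hline.lineDeriv

lemma lipschitzWith_log_det_smul_one_add (hY : ∀ v, (Y v)ᵀ = -Y v) (hs : s ≠ 0) {b : ℝ}
    (hb : ∀ v, ∑ i, ∑ j, Y v i j ^ 2 ≤ b * ‖v‖ ^ 2) :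
    LipschitzWith (√(Fintype.card n / (4 * s ^ 2) * b)).toNNReal
      fun v => Real.log (s • 1 + Y v).det := by
  refine lipschitzWith_of_nnnorm_fderiv_le
    ((contDiff_log_det_smul_one_add hY hs (k := 1)).differentiable one_ne_zero) fun v => ?_
  rw [← NNReal.coe_le_coe, coe_nnnorm, Real.coe_toNNReal _ (Real.sqrt_nonneg _)]
  refine ContinuousLinearMap.opNorm_le_bound _ (Real.sqrt_nonneg _) fun u => ?_
  rw [fderiv_log_det_smul_one_add hY hs, Real.norm_eq_abs, ← Real.sqrt_sq (norm_nonneg u),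
    ← Real.sqrt_mul' _ (sq_nonneg _), mul_assoc]
  refine Real.abs_le_sqrt ((sq_trace_inv_mul_le (hY v) hs (hY u)).trans ?_)
  gcongr
  exact hb u

end LogDet

section Matching

variable {α : Type*}

/-- A matching of the complete graph on `α`, each edge `{i, j}` being listed once as the pair
`(i, j)` with `i < j`. -/
def IsMatching [LT α] (M : Finset (α × α)) : Prop :=
  (∀ p ∈ M, p.1 < p.2) ∧
    ∀ p ∈ M, ∀ q ∈ M, p ≠ q → p.1 ≠ q.1 ∧ p.1 ≠ q.2 ∧ p.2 ≠ q.1 ∧ p.2 ≠ q.2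

lemma exists_involutive_of_symmetric {R : α → α → Prop} (hsymm : ∀ {i j}, R i j → R j i)
    (hunique : ∀ {i j k}, R i j → R i k → j = k) :
    ∃ f : α → α, f.Involutive ∧ ∀ i j, i ≠ j → (f i = j ↔ R i j) := by
  classical
  let f : α → α := fun i => if h : ∃ j, R i j then h.choose else i
  have hf {i j : α} (h : R i j) : f i = j := by
    have hex : ∃ j, R i j := ⟨j, h⟩
    simpa only [f, dif_pos hex] using hunique hex.choose_spec h
  have hf' {i : α} (h : ¬ ∃ j, R i j) : f i = i := dif_neg h
  refine ⟨f, fun i => ?_, fun i j hij => ⟨fun h => ?_, hf⟩⟩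
  · by_cases h : ∃ j, R i j
    · obtain ⟨j, hj⟩ := h
      rw [hf hj, hf (hsymm hj)]
    · rw [hf' h, hf' h]
  · by_cases hex : ∃ k, R i k
    · obtain ⟨k, hk⟩ := hex
      rwa [← h, hf hk]
    · exact absurd ((hf' hex).symm.trans h) hij

variable [LinearOrder α]

instance : DecidablePred (IsMatching (α := α)) := fun M =>
  inferInstanceAs (Decidable ((∀ p ∈ M, p.1 < p.2) ∧
    ∀ p ∈ M, ∀ q ∈ M, p ≠ q → p.1 ≠ q.1 ∧ p.1 ≠ q.2 ∧ p.2 ≠ q.1 ∧ p.2 ≠ q.2))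

lemma IsMatching.eq_of_mem {M : Finset (α × α)} (hM : IsMatching M) {i j k : α}
    (hj : (i, j) ∈ M ∨ (j, i) ∈ M) (hk : (i, k) ∈ M ∨ (k, i) ∈ M) : j = k := by
  by_contra hjk
  have hdisj := hM.2
  rcases hj with hj | hj <;> rcases hk with hk | hk
  · exact (hdisj _ hj _ hk (by simp [hjk])).1 rfl
  · exact (hdisj _ hj _ hk fun h => (hM.1 _ hj).ne (by simp_all)).2.1 rfl
  · exact (hdisj _ hj _ hk fun h => (hM.1 _ hj).ne (by simp_all)).2.2.1 rfl
  · exact (hdisj _ hj _ hk (by simp [hjk])).2.2.2 rfl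

variable [Fintype α]

/-- The two-cycles of an involution `σ`, each listed once as the pair `(i, σ i)` with `i < σ i`. -/
def twoCycles (σ : Equiv.Perm α) : Finset (α × α) :=
  Finset.univ.filter fun p => p.1 < p.2 ∧ σ p.1 = p.2

variable {σ τ : Equiv.Perm α}

lemma mem_twoCycles {p : α × α} : p ∈ twoCycles σ ↔ p.1 < p.2 ∧ σ p.1 = p.2 := by
  simp [twoCycles]

lemma apply_eq_iff_mem_twoCycles (hσ : Function.Involutive σ) {i j : α} (hij : i ≠ j) :
    σ i = j ↔ (i, j) ∈ twoCycles σ ∨ (j, i) ∈ twoCycles σ := by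
  rw [mem_twoCycles, mem_twoCycles, hσ.eq_iff (x := j)]
  grind

lemma isMatching_twoCycles (hσ : Function.Involutive σ) : IsMatching (twoCycles σ) := by
  refine ⟨fun p hp => (mem_twoCycles.1 hp).1, ?_⟩
  rintro ⟨i, j⟩ hp ⟨k, l⟩ hq hne
  obtain ⟨hij, hσi⟩ := mem_twoCycles.1 hp
  obtain ⟨hkl, hσk⟩ := mem_twoCycles.1 hq
  have hσj := hσ i
  have hσl := hσ k
  grind

lemma twoCycles_injOn : Set.InjOn (twoCycles (α := α)) {σ | Function.Involutive σ} := by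
  intro σ hσ τ hτ h
  have hmoved {i j : α} (hij : i ≠ j) : σ i = j ↔ τ i = j := by
    rw [apply_eq_iff_mem_twoCycles hσ hij, apply_eq_iff_mem_twoCycles hτ hij, h]
  ext i
  by_cases hi : i = σ i
  · by_contra hne
    exact hne ((hmoved fun h => hne (hi.symm.trans h)).2 rfl)
  · exact ((hmoved hi).1 rfl).symm

lemma exists_involutive_twoCycles_eq {M : Finset (α × α)} (hM : IsMatching M) :
    ∃ σ : Equiv.Perm α, Function.Involutive σ ∧ twoCycles σ = M := by
  obtain ⟨f, hf, hfM⟩ := exists_involutive_of_symmetric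
    (R := fun i j => (i, j) ∈ M ∨ (j, i) ∈ M) Or.symm hM.eq_of_mem
  refine ⟨hf.toPerm f, hf, ?_⟩
  ext ⟨i, j⟩
  rw [mem_twoCycles, hf.coe_toPerm]
  constructor
  · rintro ⟨hij, hfi⟩
    exact ((hfM i j hij.ne).1 hfi).resolve_right fun h => (hM.1 _ h).not_gt hij
  · exact fun h => ⟨hM.1 _ h, (hfM i j (hM.1 _ h).ne).2 (.inl h)⟩

lemma sum_involutive_eq_sum_isMatching {R : Type*} [AddCommMonoid R] (F : Finset (α × α) → R) :
    ∑ σ : Equiv.Perm α with ∀ i, σ (σ i) = i, F (twoCycles σ) =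
      ∑ M : Finset (α × α) with IsMatching M, F M := by
  refine Finset.sum_bij (fun σ _ => twoCycles σ) (fun σ hσ => ?_) (fun σ hσ τ hτ h => ?_)
    (fun M hM => ?_) fun _ _ => rfl
  · exact Finset.mem_filter.2 ⟨Finset.mem_univ _, isMatching_twoCycles (Finset.mem_filter.1 hσ).2⟩
  · exact twoCycles_injOn (Finset.mem_filter.1 hσ).2 (Finset.mem_filter.1 hτ).2 h
  · obtain ⟨σ, hσ, hσM⟩ := exists_involutive_twoCycles_eq (Finset.mem_filter.1 hM).2
    exact ⟨σ, Finset.mem_filter.2 ⟨Finset.mem_univ _, hσ⟩, hσM⟩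

@[to_additive]
lemma prod_prod_eq_prod_diag_mul {R : Type*} [CommMonoid R] (g : α → α → R) :
    ∏ i, ∏ j, g i j = (∏ i, g i i) *
      ∏ e : {p : α × α // p.1 < p.2}, g e.1.1 e.1.2 * g e.1.2 e.1.1 := by
  have hupper : ∏ e : {p : α × α // p.1 < p.2}, g e.1.1 e.1.2 * g e.1.2 e.1.1 =
      ∏ i, ∏ j, if i < j then g i j * g j i else 1 := by
    rw [← Finset.prod_subtype (Finset.univ.filter fun p : α × α => p.1 < p.2) (by simp)
      (fun p : α × α => g p.1 p.2 * g p.2 p.1), Finset.prod_filter, Fintype.prod_prod_type]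
  have hsplit : ∏ i, ∏ j, (if i < j then g i j * g j i else 1) =
      (∏ i, ∏ j, if i < j then g i j else 1) * ∏ i, ∏ j, if j < i then g i j else 1 := by
    rw [Finset.prod_comm (f := fun i j => if j < i then g i j else 1)]
    simp only [← Finset.prod_mul_distrib]
    refine Finset.prod_congr rfl fun i _ => Finset.prod_congr rfl fun j _ => ?_
    split_ifs <;> simp
  have hdiag : ∏ i, g i i = ∏ i, ∏ j, if i = j then g i j else 1 := by simp
  rw [hupper, hsplit, hdiag]
  simp only [← Finset.prod_mul_distrib]
  refine Finset.prod_congr rfl fun i _ => Finset.prod_congr rfl fun j _ => ?_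
  rcases lt_trichotomy i j with h | rfl | h
  · simp [h, h.not_gt, h.ne]
  · simp
  · simp [h, h.not_gt, h.ne']

lemma card_twoCycles (σ : Equiv.Perm α) : (twoCycles σ).card =
    ∑ e : {p : α × α // p.1 < p.2}, if σ e.1.1 = e.1.2 then 1 else 0 := by
  rw [← Finset.sum_subtype (Finset.univ.filter fun p : α × α => p.1 < p.2) (by simp)
    (fun p : α × α => if σ p.1 = p.2 then 1 else 0), ← Finset.sum_filter, Finset.filter_filter,
    Finset.card_eq_sum_ones]
  rfl

lemma card_fixed_add_two_mul_card_twoCycles (hσ : Function.Involutive σ) :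
    (Finset.univ.filter fun i => σ i = i).card + 2 * (twoCycles σ).card = Fintype.card α := by
  have h := sum_sum_eq_sum_diag_add fun i j => if σ i = j then 1 else 0
  have hσ' (i j : α) : σ i = j ↔ σ j = i := by rw [hσ.eq_iff, eq_comm]
  simp only [Finset.sum_ite_eq, Finset.mem_univ, if_true, Finset.sum_const, smul_eq_mul, mul_one,
    Finset.card_univ, ← Finset.card_filter] at h
  rw [h, card_twoCycles, two_mul, ← Finset.sum_add_distrib]
  congr 1
  exact Finset.sum_congr rfl fun e _ => by rw [if_congr (hσ' e.1.2 e.1.1) rfl rfl]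

lemma sign_eq_neg_one_pow_card_twoCycles (hσ : Function.Involutive σ) :
    Equiv.Perm.sign σ = (-1) ^ (twoCycles σ).card := by
  have hsq : σ ^ 2 = 1 := by
    ext i
    simp [pow_two, hσ i]
  have hfixed : Fintype.card (Function.fixedPoints σ) =
      (Finset.univ.filter fun i => σ i = i).card := Fintype.card_subtype _
  rw [Equiv.Perm.sign_of_pow_two_eq_one hsq, hfixed,
    ← card_fixed_add_two_mul_card_twoCycles hσ, Nat.add_sub_cancel_left,
    Nat.mul_div_cancel_left _ two_pos]

lemma IsMatching.two_mul_card_le {M : Finset (α × α)} (hM : IsMatching M) :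
    2 * M.card ≤ Fintype.card α := by
  obtain ⟨σ, hσ, rfl⟩ := exists_involutive_twoCycles_eq hM
  exact (card_fixed_add_two_mul_card_twoCycles hσ).symm ▸ Nat.le_add_left _ _

end Matching

section MatchingPolynomial

variable {N : ℕ}

lemma phiW_eq_sum_isMatching (A : Matrix (Fin N) (Fin N) ℝ) (k : ℕ) :
    phiW A k = ∑ M : Finset (Fin N × Fin N) with IsMatching M ∧ M.card = k,
      ∏ p ∈ M, A p.1 p.2 ^ 2 := by
  rw [phiW]
  exact Finset.sum_congr (by ext; simp [IsMatching]) fun _ _ => rfl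

lemma sqrt_pow_sub_two_mul {t : ℝ} (ht : 0 ≤ t) {k : ℕ} (hk : 2 * k ≤ N) :
    √t ^ (N - 2 * k) = (if Even N then 1 else √t) * t ^ (N / 2 - k) := by
  have hpow : t ^ (N / 2 - k) = √t ^ (2 * (N / 2 - k)) := by rw [pow_mul, Real.sq_sqrt ht]
  rw [hpow]
  split_ifs with hN
  · rw [one_mul, Nat.mul_sub, Nat.two_mul_div_two_of_even hN]
  · rw [← pow_succ', Nat.mul_sub, ← Nat.sub_add_comm (by omega),
      Nat.two_mul_div_two_add_one_of_odd (Nat.not_even_iff_odd.1 hN)]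

lemma PhiFull_eq_sum_isMatching (A : Matrix (Fin N) (Fin N) ℝ) {t : ℝ} (ht : 0 ≤ t) :
    PhiFull A t = ∑ M : Finset (Fin N × Fin N) with IsMatching M,
      √t ^ (N - 2 * M.card) * ∏ p ∈ M, A p.1 p.2 ^ 2 := by
  have hcard : ∀ M ∈ Finset.univ.filter (IsMatching (α := Fin N)),
      M.card ∈ Finset.range (N / 2 + 1) := fun M hM => by
    have h := (Finset.mem_filter.1 hM).2.two_mul_card_le
    rw [Fintype.card_fin] at h
    exact Finset.mem_range.2 (by omega)
  rw [PhiFull, PhiW, Finset.mul_sum, ← Finset.sum_fiberwise_of_maps_to hcard]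
  refine Finset.sum_congr rfl fun k hk => ?_
  have hk : 2 * k ≤ N := by
    have := Finset.mem_range.1 hk
    omega
  rw [phiW_eq_sum_isMatching, Finset.filter_filter, mul_left_comm, ← sqrt_pow_sub_two_mul ht hk,
    Finset.sum_mul]
  refine Finset.sum_congr rfl fun M hM => ?_
  rw [(Finset.mem_filter.1 hM).2.2, mul_comm]

end MatchingPolynomial

section ExpectedDeterminant

variable {N : ℕ} {A : Matrix (Fin N) (Fin N) ℝ} {σ : Equiv.Perm (Fin N)}

/-- The factor that the variable `x` of the edge `e` contributes to the term of `σ` in the Leibniz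
expansion of `det (s • 1 + sampleY A ξ)`. -/
noncomputable def edgeFactor (A : Matrix (Fin N) (Fin N) ℝ) (σ : Equiv.Perm (Fin N))
    (e : PairIdx N) (x : ℝ) : ℝ :=
  (if σ e.1.1 = e.1.2 then A e.1.2 e.1.1 * x else 1) *
    (if σ e.1.2 = e.1.1 then A e.1.1 e.1.2 * x else 1)

lemma det_smul_one_add_sampleY (A : Matrix (Fin N) (Fin N) ℝ) (s : ℝ) (ξ : PairIdx N → ℝ) :
    (s • 1 + sampleY A ξ).det = ∑ σ : Equiv.Perm (Fin N),
      ((Equiv.Perm.sign σ : ℤ) * s ^ (Finset.univ.filter fun i => σ i = i).card) *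
        ∏ e, edgeFactor A σ e (ξ e) := by
  rw [det_apply']
  refine Finset.sum_congr rfl fun σ _ => ?_
  have hgroup := prod_prod_eq_prod_diag_mul fun i j =>
    if σ i = j then (s • 1 + sampleY A ξ) j i else 1
  simp only [Finset.prod_ite_eq, Finset.mem_univ, if_true] at hgroup
  rw [hgroup, mul_assoc]
  congr 2
  · simp [Finset.prod_ite, sampleY]
  · refine Finset.prod_congr rfl fun e _ => ?_
    have h := e.2
    simp only [edgeFactor, sampleY, Matrix.add_apply, Matrix.smul_apply, Matrix.of_apply,
      Matrix.one_apply_ne h.ne, Matrix.one_apply_ne h.ne', h, h.not_gt, dif_pos,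
      dif_neg, not_false_eq_true, smul_zero, zero_add]

variable {μ : Measure ℝ}

lemma memLp_id_of_integral_sq_eq_one (hvar : ∫ x, x ^ 2 ∂μ = 1) :
    MemLp id 2 μ :=
  (memLp_two_iff_integrable_sq aestronglyMeasurable_id).2 <|
    .of_integral_ne_zero (hvar.trans_ne one_ne_zero)

lemma exists_integral_edgeFactor_eq_zero (hmean : ∫ x, x ∂μ = 0)
    (hσ : ¬ Function.Involutive σ) : ∃ e : PairIdx N, ∫ x, edgeFactor A σ e x ∂μ = 0 := by
  obtain ⟨i, hi⟩ : ∃ i, σ (σ i) ≠ i := by simpa [Function.Involutive] using hσ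
  have hne : σ i ≠ i := fun h => hi (by rw [h, h])
  have hlinear (c : ℝ) : ∫ x, c * x ∂μ = 0 := by rw [integral_const_mul, hmean, mul_zero]
  rcases lt_or_gt_of_ne hne with h | h
  · exact ⟨⟨(σ i, i), h⟩, by simp [edgeFactor, hi, hlinear]⟩
  · exact ⟨⟨(i, σ i), h⟩, by simp [edgeFactor, hi, hlinear]⟩

variable [IsProbabilityMeasure μ]

lemma integrable_edgeFactor (hvar : ∫ x, x ^ 2 ∂μ = 1) (e : PairIdx N) :
    Integrable (edgeFactor A σ e) μ := by
  have hL2 := memLp_id_of_integral_sq_eq_one hvar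
  have hone : MemLp (fun _ => (1 : ℝ)) 2 μ := memLp_const 1
  unfold edgeFactor
  refine MemLp.integrable_mul (p := 2) (q := 2) ?_ ?_ <;> split_ifs <;>
    first | exact hL2.const_mul _ | exact hone

lemma integral_edgeFactor_of_involutive (hA : Aᵀ = -A) (hvar : ∫ x, x ^ 2 ∂μ = 1)
    (hσ : Function.Involutive σ) (e : PairIdx N) :
    ∫ x, edgeFactor A σ e x ∂μ = if σ e.1.1 = e.1.2 then -(A e.1.1 e.1.2 ^ 2) else 1 := by
  have hskew : A e.1.2 e.1.1 = -A e.1.1 e.1.2 := congrFun₂ hA _ _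
  have hiff : σ e.1.2 = e.1.1 ↔ σ e.1.1 = e.1.2 := by rw [hσ.eq_iff, eq_comm]
  unfold edgeFactor
  simp only [hiff]
  split_ifs
  · have hsq (x : ℝ) : A e.1.2 e.1.1 * x * (A e.1.1 e.1.2 * x) = -(A e.1.1 e.1.2 ^ 2) * x ^ 2 := by
      rw [hskew]
      ring
    simp only [hsq, integral_const_mul, hvar, mul_one]
  · simp

-- For an involution the sign cancels the signs of `a_{ij} a_{ji} = -a_{ij}²`; any other permutation
-- uses the variable of some edge `{i, σ i}` exactly once.
lemma sign_mul_pow_mul_prod_integral_edgeFactor (hA : Aᵀ = -A) (hmean : ∫ x, x ∂μ = 0)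
    (hvar : ∫ x, x ^ 2 ∂μ = 1) (s : ℝ) (σ : Equiv.Perm (Fin N)) :
    ((Equiv.Perm.sign σ : ℤ) * s ^ (Finset.univ.filter fun i => σ i = i).card) *
      ∏ e : PairIdx N, ∫ x, edgeFactor A σ e x ∂μ =
    if ∀ i, σ (σ i) = i then
      s ^ (N - 2 * (twoCycles σ).card) * ∏ p ∈ twoCycles σ, A p.1 p.2 ^ 2 else 0 := by
  split_ifs with hσ
  · have hfixed : (Finset.univ.filter fun i => σ i = i).card = N - 2 * (twoCycles σ).card := by
      have := card_fixed_add_two_mul_card_twoCycles hσ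
      rw [Fintype.card_fin] at this
      omega
    have hprod : ∏ e : PairIdx N, ∫ x, edgeFactor A σ e x ∂μ =
        (-1) ^ (twoCycles σ).card * ∏ p ∈ twoCycles σ, A p.1 p.2 ^ 2 := by
      simp only [integral_edgeFactor_of_involutive hA hvar hσ]
      rw [← Finset.prod_subtype (Finset.univ.filter fun p : Fin N × Fin N => p.1 < p.2) (by simp)
        (fun p : Fin N × Fin N => if σ p.1 = p.2 then -(A p.1 p.2 ^ 2) else 1),
        ← Finset.prod_filter, Finset.filter_filter, ← Finset.prod_neg]
      rfl
    have hsign : ((Equiv.Perm.sign σ : ℤ) : ℝ) * (-1) ^ (twoCycles σ).card = 1 := by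
      rw [sign_eq_neg_one_pow_card_twoCycles hσ]
      simp [← mul_pow]
    rw [hfixed, hprod, mul_mul_mul_comm, hsign, one_mul]
  · obtain ⟨e, he⟩ := exists_integral_edgeFactor_eq_zero (A := A) hmean hσ
    exact mul_eq_zero_of_right _ (Finset.prod_eq_zero (Finset.mem_univ e) he)

lemma integral_det_smul_one_add_sampleY (hA : Aᵀ = -A) (hmean : ∫ x, x ∂μ = 0)
    (hvar : ∫ x, x ^ 2 ∂μ = 1) (s : ℝ) :
    ∫ ξ, (s • 1 + sampleY A ξ).det ∂(Measure.pi fun _ => μ) =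
      ∑ M : Finset (Fin N × Fin N) with IsMatching M,
        s ^ (N - 2 * M.card) * ∏ p ∈ M, A p.1 p.2 ^ 2 := by
  simp only [det_smul_one_add_sampleY]
  rw [integral_finsetSum _ fun σ _ => (Integrable.fintype_prod (f := edgeFactor A σ)
    fun e => integrable_edgeFactor hvar e).const_mul _]
  simp only [integral_const_mul, integral_fintype_prod_eq_prod (fun e => edgeFactor A _ e),
    sign_mul_pow_mul_prod_integral_edgeFactor hA hmean hvar, ← Finset.sum_filter]
  convert sum_involutive_eq_sum_isMatching fun M : Finset (Fin N × Fin N) =>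
    s ^ (N - 2 * M.card) * ∏ p ∈ M, A p.1 p.2 ^ 2

lemma integral_det_sampleY_gaussPi (hA : Aᵀ = -A) {t : ℝ} (ht : 0 ≤ t) :
    ∫ ξ, (√t • 1 + sampleY A ξ).det ∂(gaussPi N) = PhiFull A t := by
  have hmean : ∫ x, x ∂(gaussianReal 0 1) = 0 := integral_id_gaussianReal
  have hvar : ∫ x, x ^ 2 ∂(gaussianReal 0 1) = 1 := by
    have h := variance_id_gaussianReal (μ := 0) (v := 1)
    rw [variance_eq_integral aemeasurable_id] at h
    simpa [hmean] using h
  rw [PhiFull_eq_sum_isMatching A ht, gaussPi, integral_det_smul_one_add_sampleY hA hmean hvar]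

end ExpectedDeterminant

section SampleMatrix

variable {N : ℕ}

lemma integral_gaussPi_eq_integral_stdGaussian (g : (PairIdx N → ℝ) → ℝ) :
    ∫ ξ, g ξ ∂(gaussPi N) = ∫ v, g v.ofLp ∂(stdGaussian (EuclideanSpace ℝ (PairIdx N))) := by
  rw [← map_pi_eq_stdGaussian]
  exact ((MeasurableEquiv.toLp 2 (PairIdx N → ℝ)).measurableEmbedding.integral_map
    (μ := Measure.pi fun _ => gaussianReal 0 1) fun v => g v.ofLp).symm

/-- `sampleY A` as a linear map on the Euclidean space of edge weights, whose standard Gaussian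
measure corresponds to `gaussPi N`. -/
noncomputable def sampleLinearMap (A : Matrix (Fin N) (Fin N) ℝ) :
    EuclideanSpace ℝ (PairIdx N) →ₗ[ℝ] Matrix (Fin N) (Fin N) ℝ where
  toFun v := sampleY A v.ofLp
  map_add' v w := by
    ext i j
    simp only [sampleY, of_apply, Matrix.add_apply, PiLp.add_apply]
    split_ifs <;> ring
  map_smul' c v := by
    ext i j
    simp only [sampleY, of_apply, Matrix.smul_apply, PiLp.smul_apply, smul_eq_mul, RingHom.id_apply]
    split_ifs <;> ring

variable {A : Matrix (Fin N) (Fin N) ℝ}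

lemma sampleLinearMap_transpose (hA : Aᵀ = -A) (v : EuclideanSpace ℝ (PairIdx N)) :
    (sampleLinearMap A v)ᵀ = -sampleLinearMap A v := by
  ext i j
  have hskew : A j i = -A i j := congrFun₂ hA i j
  change sampleY A v.ofLp j i = -sampleY A v.ofLp i j
  rcases lt_trichotomy i j with h | rfl | h
  · simp [sampleY, h, h.not_gt, hskew]
  · simp [sampleY]
  · simp [sampleY, h, h.not_gt, hskew]

lemma sum_sq_sampleLinearMap_le {a : ℝ} (ha : ∀ i j, |A i j| ≤ a)
    (v : EuclideanSpace ℝ (PairIdx N)) :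
    ∑ i, ∑ j, sampleLinearMap A v i j ^ 2 ≤ 2 * a ^ 2 * ‖v‖ ^ 2 := by
  have hsq (i j : Fin N) : A i j ^ 2 ≤ a ^ 2 := sq_le_sq.2 ((ha i j).trans (le_abs_self a))
  change ∑ i, ∑ j, sampleY A v.ofLp i j ^ 2 ≤ _
  rw [sum_sum_eq_sum_diag_add, EuclideanSpace.real_norm_sq_eq, Finset.mul_sum]
  have hdiag (i : Fin N) : sampleY A v.ofLp i i = 0 := by simp [sampleY]
  have hedge (e : PairIdx N) : sampleY A v.ofLp e.1.1 e.1.2 ^ 2 + sampleY A v.ofLp e.1.2 e.1.1 ^ 2 =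
      (A e.1.1 e.1.2 ^ 2 + A e.1.2 e.1.1 ^ 2) * v e ^ 2 := by
    simp [sampleY, e.2, e.2.not_gt]
    ring
  simp only [hdiag, hedge, zero_pow two_ne_zero, Finset.sum_const_zero, zero_add]
  gcongr with e
  linarith [hsq e.1.1 e.1.2, hsq e.1.2 e.1.1]

variable {t : ℝ}

lemma logPhiTilde_eq_integral_stdGaussian (t : ℝ) (A : Matrix (Fin N) (Fin N) ℝ) :
    logPhiTilde t A = ∫ v, Real.log (√t • 1 + sampleLinearMap A v).det
      ∂(stdGaussian (EuclideanSpace ℝ (PairIdx N))) :=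
  integral_gaussPi_eq_integral_stdGaussian _

lemma PhiFull_eq_integral_stdGaussian (hA : Aᵀ = -A) (ht : 0 < t) :
    PhiFull A t = ∫ v, Real.exp (Real.log (√t • 1 + sampleLinearMap A v).det)
      ∂(stdGaussian (EuclideanSpace ℝ (PairIdx N))) := by
  rw [← integral_det_sampleY_gaussPi hA ht.le, integral_gaussPi_eq_integral_stdGaussian]
  refine integral_congr_ae (.of_forall fun v => (Real.exp_log ?_).symm)
  exact det_smul_one_add_pos (sampleLinearMap_transpose hA v) (Real.sqrt_pos.2 ht)

lemma lipschitzWith_log_det_sampleLinearMap (hA : Aᵀ = -A) {a : ℝ} (ha : ∀ i j, |A i j| ≤ a)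
    (ht : 0 < t) : LipschitzWith (√(N * (a ^ 2 / (2 * t)))).toNNReal
      fun v => Real.log (√t • 1 + sampleLinearMap A v).det := by
  have hconst : (Fintype.card (Fin N) : ℝ) / (4 * √t ^ 2) * (2 * a ^ 2) =
      N * (a ^ 2 / (2 * t)) := by
    rw [Fintype.card_fin, Real.sq_sqrt ht.le]
    field_simp
    norm_num
  exact hconst ▸ lipschitzWith_log_det_smul_one_add (sampleLinearMap_transpose hA)
    (Real.sqrt_pos.2 ht).ne' (sum_sq_sampleLinearMap_le ha)

lemma logPhiTilde_le_log_PhiFull (hA : Aᵀ = -A) (ht : 0 < t) :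
    logPhiTilde t A ≤ Real.log (PhiFull A t) := by
  obtain ⟨a, ha⟩ := Finite.exists_le fun p : Fin N × Fin N => |A p.1 p.2|
  rw [logPhiTilde_eq_integral_stdGaussian, PhiFull_eq_integral_stdGaussian hA ht]
  exact integral_le_log_integral_exp
    (lipschitzWith_log_det_sampleLinearMap hA (fun i j => ha (i, j)) ht)

lemma log_PhiFull_le (hA : Aᵀ = -A) {a : ℝ} (ha : ∀ i j, |A i j| ≤ a) (ht : 0 < t) :
    Real.log (PhiFull A t) ≤ logPhiTilde t A + N * (a ^ 2 / (2 * t)) := by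
  have hconc := log_integral_exp_le
    (contDiff_log_det_smul_one_add (sampleLinearMap_transpose hA) (Real.sqrt_pos.2 ht).ne')
    (lipschitzWith_log_det_sampleLinearMap hA ha ht)
  rwa [Real.coe_toNNReal _ (Real.sqrt_nonneg _), Real.sq_sqrt (by positivity),
    ← logPhiTilde_eq_integral_stdGaussian, ← PhiFull_eq_integral_stdGaussian hA ht] at hconc

end SampleMatrix

/-- `(1/N) log Φ̃(t,A) ≤ (1/N) log Φ(t,A) ≤ (1/N) log Φ̃(t,A) + a²/(2t)`,
where for `N` odd `Φ(t,A)` is replaced by `√t·Φ(t,A)`. -/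
theorem log_matching_polynomial_gap_le
    {N : ℕ} (A : Matrix (Fin N) (Fin N) ℝ) (hA : Aᵀ = -A) (hA0 : A ≠ 0)
    (a : ℝ) (ha : ∀ i j, |A i j| ≤ a) (ha' : ∃ i j, |A i j| = a)
    (t : ℝ) (ht : 0 < t) :
    (1 / (N : ℝ)) * logPhiTilde t A ≤ (1 / (N : ℝ)) * Real.log (PhiFull A t) ∧
      (1 / (N : ℝ)) * Real.log (PhiFull A t) ≤
        (1 / (N : ℝ)) * logPhiTilde t A + a ^ 2 / (2 * t) := by
  obtain ⟨i, -, -⟩ := ha'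
  have hN : (0 : ℝ) < N := by exact_mod_cast i.pos
  refine ⟨mul_le_mul_of_nonneg_left (logPhiTilde_le_log_PhiFull hA ht) (by positivity), ?_⟩
  calc (1 / (N : ℝ)) * Real.log (PhiFull A t)
      ≤ (1 / (N : ℝ)) * (logPhiTilde t A + N * (a ^ 2 / (2 * t))) :=
        mul_le_mul_of_nonneg_left (log_PhiFull_le hA ha ht) (by positivity)
    _ = (1 / (N : ℝ)) * logPhiTilde t A + a ^ 2 / (2 * t) := by
        rw [mul_add, one_div, inv_mul_cancel_left₀ hN.ne']
end

section
/- Let X be a real Gaussian random variable (not almost surely constant). Then log E X² − E log X² ≤ C₁, where C₁ := −(1/√(2π)) ∫_ℝ log(x²) e^{−x²/2} dx. -/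
/-!
The proof compares Laplace transforms. Frullani's integral
`log x = ∫₀^∞ (e^{-u} - e^{-ux}) / u du` turns `E e^{-uY} ≤ E e^{-uX}` for all `u > 0` into
`E log X ≤ E log Y`, for positive `X` and `Y`. If `X` has law `N(m, v)`, then
`E e^{-uX²} = A^{-1/2} e^{-um²/A}` with `A = 1 + 2uv`, and `log (1 + 2um²/A) ≤ 2um²/A` bounds
this by `(1 + 2u(m² + v))^{-1/2}`, the Laplace transform of the square of the centred Gaussian
with the same second moment. So `E log X²` at a given second moment is smallest for the centred
Gaussian, where scaling shows that equality holds.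
-/

open MeasureTheory ProbabilityTheory

section

open Real Set Filter
open scoped Topology NNReal ENNReal

lemma inv_mul_exp_neg_sub_exp_neg_nonneg {a b u : ℝ} (hab : a ≤ b) (hu : 0 < u) :
    0 ≤ u⁻¹ * (exp (-(a * u)) - exp (-(b * u))) :=
  mul_nonneg (inv_nonneg.2 hu.le) (sub_nonneg.2 (by gcongr))

lemma inv_mul_exp_neg_sub_exp_neg_le {a u : ℝ} (b : ℝ) (hu : 0 < u) :
    u⁻¹ * (exp (-(a * u)) - exp (-(b * u))) ≤ (b - a) * exp (-a * u) := by
  rw [inv_mul_le_iff₀ hu]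
  calc exp (-(a * u)) - exp (-(b * u))
      = exp (-a * u) * (1 - exp (-((b - a) * u))) := by
        rw [mul_sub, ← exp_add]; ring_nf
    _ ≤ exp (-a * u) * ((b - a) * u) := by
        gcongr; linarith [add_one_le_exp (-((b - a) * u))]
    _ = u * ((b - a) * exp (-a * u)) := by ring

lemma integrableOn_inv_mul_exp_neg_sub_exp_neg {a b : ℝ} (ha : 0 < a) (hb : 0 < b) :
    IntegrableOn (fun u ↦ u⁻¹ * (exp (-(a * u)) - exp (-(b * u)))) (Ioi 0) := by
  wlog hab : a ≤ b generalizing a b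
  · refine (this hb ha (le_of_not_ge hab)).neg.congr (.of_forall fun u ↦ ?_)
    simp only [Pi.neg_apply]
    ring
  refine ((integrableOn_exp_mul_Ioi (neg_neg_of_pos ha) 0).const_mul (b - a)).mono'
    (Measurable.aestronglyMeasurable (by fun_prop)) ?_
  filter_upwards [ae_restrict_mem measurableSet_Ioi] with u hu
  rw [norm_of_nonneg (inv_mul_exp_neg_sub_exp_neg_nonneg hab hu)]
  exact inv_mul_exp_neg_sub_exp_neg_le b hu

lemma integral_Ioi_inv_mul_exp_neg_sub_exp_neg {a b : ℝ} (ha : 0 < a) (hb : 0 < b) :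
    ∫ u in Ioi 0, u⁻¹ * (exp (-(a * u)) - exp (-(b * u))) = log (b / a) := by
  have h_cont : Continuous fun x : ℝ ↦ exp (-x) := by fun_prop
  have h_zero : Tendsto (fun x : ℝ ↦ exp (-x)) (𝓝[>] 0) (𝓝 1) := by
    simpa using (h_cont.tendsto 0).mono_left nhdsWithin_le_nhds
  simpa using Frullani.integral_Ioi_eq (h_cont.locallyIntegrable.locallyIntegrableOn _) ha hb h_zero
    tendsto_exp_neg_atTop_nhds_zero (integrableOn_inv_mul_exp_neg_sub_exp_neg ha hb)

lemma integral_Ioi_norm_inv_mul_exp_neg_sub_exp_neg {a b : ℝ} (ha : 0 < a) (hb : 0 < b) :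
    ∫ u in Ioi 0, ‖u⁻¹ * (exp (-(a * u)) - exp (-(b * u)))‖ = |log (b / a)| := by
  wlog hab : a ≤ b generalizing a b
  · rw [← inv_div, log_inv, abs_neg, ← this hb ha (le_of_not_ge hab)]
    simp only [norm_mul, norm_sub_rev]
  rw [← integral_Ioi_inv_mul_exp_neg_sub_exp_neg ha hb, abs_of_nonneg]
  · exact setIntegral_congr_fun measurableSet_Ioi fun u hu ↦
      norm_of_nonneg (inv_mul_exp_neg_sub_exp_neg_nonneg hab hu)
  · exact setIntegral_nonneg measurableSet_Ioi fun u hu ↦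
      inv_mul_exp_neg_sub_exp_neg_nonneg hab hu

section LaplaceOrder

variable {Ω Ω' : Type*} {mΩ : MeasurableSpace Ω} {mΩ' : MeasurableSpace Ω'}
  {μ : Measure Ω} {ν : Measure Ω'} {X : Ω → ℝ} {Y : Ω' → ℝ}

lemma aemeasurable_of_log (hpos : ∀ᵐ ω ∂μ, 0 < X ω) (hlog : AEMeasurable (fun ω ↦ log (X ω)) μ) :
    AEMeasurable X μ :=
  hlog.exp.congr (hpos.mono fun _ ↦ exp_log)

lemma integrable_prod_inv_mul_exp_neg_sub_exp_neg [SFinite μ] (hpos : ∀ᵐ ω ∂μ, 0 < X ω)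
    (hlog : Integrable (fun ω ↦ log (X ω)) μ) :
    Integrable (fun p : Ω × ℝ ↦ p.2⁻¹ * (exp (-p.2) - exp (-(X p.1 * p.2))))
      (μ.prod (volume.restrict (Ioi 0))) := by
  have hX : AEMeasurable X μ := aemeasurable_of_log hpos hlog.aemeasurable
  have h_meas : AEMeasurable (fun p : Ω × ℝ ↦ p.2⁻¹ * (exp (-p.2) - exp (-(X p.1 * p.2))))
      (μ.prod (volume.restrict (Ioi 0))) := by
    have := hX.comp_fst (ν := volume.restrict (Ioi (0 : ℝ)))
    fun_prop
  refine (integrable_prod_iff h_meas.aestronglyMeasurable).2 ⟨?_, hlog.norm.congr ?_⟩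
  · exact hpos.mono fun ω hω ↦ by
      simpa [IntegrableOn] using integrableOn_inv_mul_exp_neg_sub_exp_neg one_pos hω
  · filter_upwards [hpos] with ω hω
    simpa using (integral_Ioi_norm_inv_mul_exp_neg_sub_exp_neg one_pos hω).symm

lemma integrable_exp_neg_mul [IsFiniteMeasure μ] (hX : AEMeasurable X μ) (hpos : ∀ᵐ ω ∂μ, 0 ≤ X ω)
    {u : ℝ} (hu : 0 ≤ u) : Integrable (fun ω ↦ exp (-(X ω * u))) μ := by
  refine .of_bound (C := 1) (by fun_prop) ?_
  filter_upwards [hpos] with ω hω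
  rw [norm_of_nonneg (exp_pos _).le, exp_le_one_iff, neg_nonpos]
  positivity

lemma integral_inv_mul_exp_neg_sub_exp_neg [IsProbabilityMeasure μ] (hX : AEMeasurable X μ)
    (hpos : ∀ᵐ ω ∂μ, 0 ≤ X ω) {u : ℝ} (hu : 0 ≤ u) :
    ∫ ω, u⁻¹ * (exp (-u) - exp (-(X ω * u))) ∂μ = u⁻¹ * (exp (-u) - mgf X μ (-u)) := by
  rw [integral_const_mul, integral_sub (integrable_const _) (integrable_exp_neg_mul hX hpos hu)]
  simp [mgf, mul_comm]

lemma integrableOn_inv_mul_exp_neg_sub_mgf [IsProbabilityMeasure μ] (hpos : ∀ᵐ ω ∂μ, 0 < X ω)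
    (hlog : Integrable (fun ω ↦ log (X ω)) μ) :
    IntegrableOn (fun u ↦ u⁻¹ * (exp (-u) - mgf X μ (-u))) (Ioi 0) :=
  (integrable_prod_inv_mul_exp_neg_sub_exp_neg hpos hlog).integral_prod_right.congr <|
    (ae_restrict_mem measurableSet_Ioi).mono fun _ hu ↦
      integral_inv_mul_exp_neg_sub_exp_neg (aemeasurable_of_log hpos hlog.aemeasurable)
        (hpos.mono fun _ ↦ le_of_lt) (le_of_lt hu)

lemma integral_log_eq_integral_mgf [IsProbabilityMeasure μ] (hpos : ∀ᵐ ω ∂μ, 0 < X ω)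
    (hlog : Integrable (fun ω ↦ log (X ω)) μ) :
    ∫ ω, log (X ω) ∂μ = ∫ u in Ioi 0, u⁻¹ * (exp (-u) - mgf X μ (-u)) := by
  calc ∫ ω, log (X ω) ∂μ
      = ∫ ω, (∫ u in Ioi 0, u⁻¹ * (exp (-u) - exp (-(X ω * u)))) ∂μ := by
        refine integral_congr_ae (hpos.mono fun ω hω ↦ ?_)
        simpa using (integral_Ioi_inv_mul_exp_neg_sub_exp_neg one_pos hω).symm
    _ = ∫ u in Ioi 0, ∫ ω, u⁻¹ * (exp (-u) - exp (-(X ω * u))) ∂μ :=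
        integral_integral_swap (integrable_prod_inv_mul_exp_neg_sub_exp_neg hpos hlog)
    _ = ∫ u in Ioi 0, u⁻¹ * (exp (-u) - mgf X μ (-u)) :=
        setIntegral_congr_fun measurableSet_Ioi fun u hu ↦
          integral_inv_mul_exp_neg_sub_exp_neg (aemeasurable_of_log hpos hlog.aemeasurable)
            (hpos.mono fun _ ↦ le_of_lt) (le_of_lt hu)

theorem integral_log_le_integral_log_of_mgf_neg_le [IsProbabilityMeasure μ]
    [IsProbabilityMeasure ν] (hX : ∀ᵐ ω ∂μ, 0 < X ω) (hY : ∀ᵐ ω ∂ν, 0 < Y ω)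
    (hlogX : Integrable (fun ω ↦ log (X ω)) μ) (hlogY : Integrable (fun ω ↦ log (Y ω)) ν)
    (hmgf : ∀ u > 0, mgf Y ν (-u) ≤ mgf X μ (-u)) :
    ∫ ω, log (X ω) ∂μ ≤ ∫ ω, log (Y ω) ∂ν := by
  rw [integral_log_eq_integral_mgf hX hlogX, integral_log_eq_integral_mgf hY hlogY]
  refine setIntegral_mono_on (integrableOn_inv_mul_exp_neg_sub_mgf hX hlogX)
    (integrableOn_inv_mul_exp_neg_sub_mgf hY hlogY) measurableSet_Ioi fun u hu ↦ ?_
  exact mul_le_mul_of_nonneg_left (sub_le_sub_left (hmgf u hu) _) (inv_nonneg.2 (le_of_lt hu))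

end LaplaceOrder

lemma integrable_log_of_le_smul_volume {μ : Measure ℝ} {c : ℝ≥0∞} (hc : c ≠ ∞)
    (hμ : μ ≤ c • volume) (hid : Integrable id μ) : Integrable log μ := by
  have h_near : IntegrableOn log (Ioc (-1) 1) μ :=
    (((intervalIntegrable_iff_integrableOn_Ioc_of_le (by norm_num)).1
      intervalIntegral.intervalIntegrable_log').smul_measure hc).mono_measure
      ((Measure.restrict_mono_measure hμ _).trans_eq (Measure.restrict_smul ..))
  have h_far : IntegrableOn log (Ioc (-1) 1)ᶜ μ := by
    refine hid.norm.integrableOn.mono' (by fun_prop) ?_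
    filter_upwards [ae_restrict_mem measurableSet_Ioc.compl] with x hx
    have hx1 : 1 ≤ |x| := by
      by_contra! h
      exact hx ⟨(abs_lt.1 h).1, (abs_lt.1 h).2.le⟩
    rw [norm_eq_abs, ← log_abs, abs_of_nonneg (log_nonneg hx1)]
    exact log_le_self (abs_nonneg x)
  simpa only [union_compl_self, integrableOn_univ] using h_near.union h_far

section Gaussian

variable {v : ℝ≥0}

lemma gaussianReal_le_smul_volume (m : ℝ) (hv : v ≠ 0) :
    gaussianReal m v ≤ ENNReal.ofReal (√(2 * π * v))⁻¹ • volume := by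
  rw [gaussianReal_of_var_ne_zero m hv, ← withDensity_const]
  refine withDensity_mono (.of_forall fun x ↦ ENNReal.ofReal_le_ofReal ?_)
  refine mul_le_of_le_one_right (by positivity) (exp_le_one_iff.2 ?_)
  exact div_nonpos_of_nonpos_of_nonneg (neg_nonpos.2 (sq_nonneg _)) (by positivity)

lemma integrable_log_sq_gaussianReal (m : ℝ) (hv : v ≠ 0) :
    Integrable (fun x ↦ log (x ^ 2)) (gaussianReal m v) := by
  simp only [log_pow]
  exact (integrable_log_of_le_smul_volume ENNReal.ofReal_ne_top (gaussianReal_le_smul_volume m hv)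
    ((memLp_id_gaussianReal 1).integrable le_rfl)).const_mul _

lemma ae_sq_pos_gaussianReal (m : ℝ) (hv : v ≠ 0) : ∀ᵐ x ∂gaussianReal m v, 0 < x ^ 2 := by
  filter_upwards [(gaussianReal_absolutelyContinuous m hv).ae_le (Measure.ae_ne volume 0)] with x hx
  exact sq_pos_of_ne_zero hx

lemma integral_sq_gaussianReal (m : ℝ) (v : ℝ≥0) : ∫ x, x ^ 2 ∂gaussianReal m v = m ^ 2 + v := by
  have h := variance_eq_sub (memLp_id_gaussianReal (μ := m) (v := v) 2)
  simp only [variance_id_gaussianReal, Pi.pow_apply, id, integral_id_gaussianReal] at h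
  linarith

lemma gaussianPDFReal_mul_exp_mul_sq {t : ℝ} (m x : ℝ) (hv : v ≠ 0) (ht : 2 * t * v < 1) :
    gaussianPDFReal m v x * exp (t * x ^ 2) =
      exp (t * m ^ 2 / (1 - 2 * t * v)) / √(1 - 2 * t * v) *
        gaussianPDFReal (m / (1 - 2 * t * v)) (v / (1 - 2 * t * v)).toNNReal x := by
  obtain ⟨a, ha⟩ : ∃ a, a = 1 - 2 * t * v := ⟨_, rfl⟩
  have ha0 : 0 < a := by linarith
  have h_complete_square : -(x - m) ^ 2 / (2 * v) + t * x ^ 2 =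
      t * m ^ 2 / a + -(x - m / a) ^ 2 / (2 * (v / a)) := by
    field_simp
    linear_combination (a * x ^ 2 - m ^ 2) * ha
  have h_sqrt : √(2 * π * v) = √(2 * π * (v / a)) * √a := by
    rw [← sqrt_mul (by positivity)]
    congr 1
    field_simp
  rw [← ha, gaussianPDFReal, gaussianPDFReal, coe_toNNReal _ (by positivity), mul_assoc, ← exp_add,
    h_complete_square, exp_add, h_sqrt, mul_inv]
  ring

lemma mgf_sq_gaussianReal {t : ℝ} (m : ℝ) (ht : 2 * t * v < 1) :
    mgf (fun x ↦ x ^ 2) (gaussianReal m v) t =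
      exp (t * m ^ 2 / (1 - 2 * t * v)) / √(1 - 2 * t * v) := by
  rcases eq_or_ne v 0 with rfl | hv
  · simp [mgf]
  have hv' : (v / (1 - 2 * t * v)).toNNReal ≠ 0 :=
    (toNNReal_pos.2 (div_pos (by positivity) (by linarith))).ne'
  simp only [mgf, integral_gaussianReal_eq_integral_smul hv, smul_eq_mul,
    gaussianPDFReal_mul_exp_mul_sq m _ hv ht]
  rw [integral_const_mul, integral_gaussianPDFReal_eq_one _ hv', mul_one]

lemma exp_div_sqrt_le_inv_sqrt_sub {a b : ℝ} (ha : 0 < a) (hab : 0 < a - 2 * b) :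
    exp (b / a) / √a ≤ (√(a - 2 * b))⁻¹ := by
  have h_exp : √(a - 2 * b) ≤ √a * exp (-(b / a)) := by
    rw [sqrt_le_left (by positivity), mul_pow, sq_sqrt ha.le, ← exp_nat_mul]
    calc a - 2 * b = a * (-(2 * (b / a)) + 1) := by field_simp; ring
      _ ≤ a * exp (-(2 * (b / a))) := by gcongr; exact add_one_le_exp _
      _ = a * exp (↑2 * -(b / a)) := by ring_nf
  rw [le_inv_comm₀ (by positivity) (by positivity), inv_div, div_eq_mul_inv, ← exp_neg]
  exact h_exp

lemma mgf_sq_gaussianReal_le {t : ℝ} (m : ℝ) (ht : 2 * t * (m ^ 2 + v) < 1) :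
    mgf (fun x ↦ x ^ 2) (gaussianReal m v) t ≤
      mgf (fun x ↦ x ^ 2) (gaussianReal 0 (‖m‖₊ ^ 2 + v)) t := by
  have hw : ((‖m‖₊ ^ 2 + v : ℝ≥0) : ℝ) = m ^ 2 + v := by simp
  have htv : 2 * t * v < 1 := by
    rcases le_total t 0 with h | h <;> nlinarith [sq_nonneg m, v.coe_nonneg]
  have h_split : 1 - 2 * t * (m ^ 2 + v) = 1 - 2 * t * v - 2 * (t * m ^ 2) := by ring
  rw [mgf_sq_gaussianReal m htv, mgf_sq_gaussianReal 0 (hw ▸ ht), hw, h_split]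
  simpa using exp_div_sqrt_le_inv_sqrt_sub (sub_pos.2 htv) (h_split ▸ sub_pos.2 ht)

lemma integral_log_sq_gaussianReal_zero_one : ∫ x, log (x ^ 2) ∂gaussianReal 0 1 = -C1 := by
  rw [integral_gaussianReal_eq_integral_smul one_ne_zero, C1, neg_mul, neg_neg,
    ← integral_const_mul]
  congr with x
  simp only [gaussianPDFReal, NNReal.coe_one, mul_one, sub_zero, smul_eq_mul]
  ring

lemma integral_log_sq_gaussianReal_zero (hv : v ≠ 0) :
    ∫ x, log (x ^ 2) ∂gaussianReal 0 v = log v - C1 := by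
  have hv' : (v : ℝ) ≠ 0 := by simpa
  have h_map : gaussianReal 0 v = (gaussianReal 0 1).map (√v * ·) := by
    rw [gaussianReal_map_const_mul, mul_zero, mul_one]
    congr
    ext
    simp
  calc ∫ x, log (x ^ 2) ∂gaussianReal 0 v
      = ∫ x, log ((√v * x) ^ 2) ∂gaussianReal 0 1 := by
        rw [h_map, integral_map (by fun_prop) (Measurable.aestronglyMeasurable (by fun_prop))]
    _ = ∫ x, (log v + log (x ^ 2)) ∂gaussianReal 0 1 := by
        refine integral_congr_ae ((ae_sq_pos_gaussianReal 0 one_ne_zero).mono fun x hx ↦ ?_)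
        simp only [mul_pow, sq_sqrt v.coe_nonneg, log_mul hv' hx.ne']
    _ = log v - C1 := by
        rw [integral_add (integrable_const _) (integrable_log_sq_gaussianReal 0 one_ne_zero),
          integral_log_sq_gaussianReal_zero_one]
        simp [sub_eq_add_neg]

theorem log_sub_C1_le_integral_log_sq_gaussianReal (m : ℝ) (hv : v ≠ 0) :
    log (m ^ 2 + v) - C1 ≤ ∫ x, log (x ^ 2) ∂gaussianReal m v := by
  have hw : ‖m‖₊ ^ 2 + v ≠ 0 := by positivity
  calc log (m ^ 2 + v) - C1
      = ∫ x, log (x ^ 2) ∂gaussianReal 0 (‖m‖₊ ^ 2 + v) := by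
        rw [integral_log_sq_gaussianReal_zero hw]; simp
    _ ≤ ∫ x, log (x ^ 2) ∂gaussianReal m v :=
        integral_log_le_integral_log_of_mgf_neg_le
          (ae_sq_pos_gaussianReal 0 hw) (ae_sq_pos_gaussianReal m hv)
          (integrable_log_sq_gaussianReal 0 hw) (integrable_log_sq_gaussianReal m hv)
          fun u hu ↦ mgf_sq_gaussianReal_le m (by nlinarith [sq_nonneg m, v.coe_nonneg])

end Gaussian

end

/-- for a (nondegenerate) real Gaussian random variable `X`,
`log E X² - E log X² ≤ C₁`. -/
theorem log_expectation_sq_sub_expectation_log_sq_le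
    {Ω : Type*} [MeasurableSpace Ω] (μ : Measure Ω) [IsProbabilityMeasure μ]
    (X : Ω → ℝ) (hX : Measurable X)
    (m : ℝ) (v : NNReal) (hv : v ≠ 0)
    (hlaw : μ.map X = gaussianReal m v) :
    Real.log (∫ ω, (X ω) ^ 2 ∂μ) - ∫ ω, Real.log ((X ω) ^ 2) ∂μ ≤ C1 := by
  have h_sq : ∫ ω, (X ω) ^ 2 ∂μ = m ^ 2 + v := by
    rw [← integral_sq_gaussianReal m v, ← hlaw, integral_map hX.aemeasurable (by fun_prop)]
  have h_log : ∫ ω, Real.log ((X ω) ^ 2) ∂μ = ∫ x, Real.log (x ^ 2) ∂gaussianReal m v := by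
    rw [← hlaw, integral_map hX.aemeasurable (Measurable.aestronglyMeasurable (by fun_prop))]
  rw [h_sq, h_log]
  linarith [log_sub_C1_le_integral_log_sq_gaussianReal m hv]
end

section
/- Define g : [0,∞) → ℝ by g(a) := log(1 + a²) − (1/√(2π)) ∫_ℝ log((x + a)²) e^{−x²/2} dx. Then g is decreasing on [0,∞), g(0) = C₁ := −(1/√(2π)) ∫_ℝ log(x²) e^{−x²/2} dx, and lim_{a→∞} g(a) = 0. -/
open Filter

/-- `g(a) = log(1 + a²) - (1/√(2π)) ∫ log((x+a)²) e^{-x²/2} dx`, i.e.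
`g(a) = log E (Y+a)² - E log (Y+a)²` for a standard Gaussian `Y`. -/
noncomputable def gGap (a : ℝ) : ℝ :=
  Real.log (1 + a ^ 2) -
    (Real.sqrt (2 * Real.pi))⁻¹ * ∫ x : ℝ, Real.log ((x + a) ^ 2) * Real.exp (-x ^ 2 / 2)

/-!
Let `ℓ(a) = E log |Y|` for `Y ∼ N(a, 1)`, so that `g(a) = log (1 + a²) - 2 ℓ(a)`.

Differentiating the Gaussian density in its mean gives `∂ₐ E f(Y) = E (Y - a) f(Y)`. Applied to
`log |y|` and then to `y log |y|` this yields `ℓ'' + a ℓ' = E (Y - a) Y log |Y| - E log |Y|`, and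
Stein's identity for `y log |y|` turns the right-hand side into `1`. Hence `w = -g'` satisfies
`w' + a w = 4a² / (1 + a²)² > 0` for `a > 0`, while `w(0) = 0` because `ℓ` is even; multiplying by
the integrating factor `e^{a²/2}` gives `w > 0` on `(0, ∞)`.

For the limit write `log |y| = log⁺ y - log⁺ y⁻¹`. The first part is `1`-Lipschitz, so
`E log⁺ Y - log⁺ a → 0` by dominated convergence; the second is Lebesgue integrable, so its mean
vanishes as the Gaussian moves to infinity. Finally `log (1 + a²) - 2 log⁺ a → 0`.
-/

open MeasureTheory ProbabilityTheory Set Topology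
open scoped NNReal

section Calculus

variable {E : Type*} [NormedAddCommGroup E] [NormedSpace ℝ E]

lemma deriv_zero_of_even {f : ℝ → E} (hf : Function.Even f) : deriv f 0 = 0 := by
  have h : deriv f 0 = -deriv f 0 := by
    simpa only [show (fun x ↦ f (-x)) = f from funext hf, neg_zero] using deriv_comp_neg f 0
  linear_combination (norm := module) (1 / 2 : ℝ) • h

lemma pos_of_hasDerivAt_add_mul_pos {w w' p P : ℝ → ℝ} {c : ℝ} (hc : 0 ≤ w c)
    (hw : ∀ x, c ≤ x → HasDerivAt w (w' x) x) (hP : ∀ x, c ≤ x → HasDerivAt P (p x) x)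
    (hpos : ∀ x, c < x → 0 < w' x + p x * w x) {x : ℝ} (hx : c < x) : 0 < w x := by
  have hderiv : ∀ y, c ≤ y → HasDerivAt (fun y ↦ Real.exp (P y) * w y)
      (Real.exp (P y) * (w' y + p y * w y)) y := fun y hy ↦
    ((hP y hy).exp.mul (hw y hy)).congr_deriv (by ring)
  have hmono : StrictMonoOn (fun y ↦ Real.exp (P y) * w y) (Ici c) := by
    refine strictMonoOn_of_deriv_pos (convex_Ici c)
      (fun y hy ↦ (hderiv y hy).continuousAt.continuousWithinAt) fun y hy ↦ ?_
    rw [interior_Ici] at hy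
    rw [(hderiv y hy.le).deriv]
    exact mul_pos (Real.exp_pos _) (hpos y hy)
  have hlt : Real.exp (P c) * w c < Real.exp (P x) * w x := hmono self_mem_Ici hx.le hx
  exact pos_of_mul_pos_right ((mul_nonneg (Real.exp_pos _).le hc).trans_lt hlt) (Real.exp_pos _).le

lemma integral_eq_zero_of_hasDerivAt_off_countable [CompleteSpace E] {f f' : ℝ → E} {s : Set ℝ}
    (hs : s.Countable) (hcont : Continuous f) (hderiv : ∀ x ∉ s, HasDerivAt f (f' x) x)
    (hf : Integrable f) (hf' : Integrable f') : ∫ x, f' x = 0 := by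
  have hlim : Tendsto (fun b ↦ f b - f (-b)) atTop (𝓝 (∫ x, f' x)) := by
    refine (intervalIntegral_tendsto_integral hf' tendsto_neg_atTop_atBot tendsto_id).congr
      fun b ↦ ?_
    exact integral_eq_of_hasDerivAt_off_countable f f' hs hcont.continuousOn
      (fun x hx ↦ hderiv x hx.2) hf'.intervalIntegrable
  refine IntegrableAtFilter.eq_zero_of_tendsto (l := atTop) (μ := volume)
    ((hf.sub hf.comp_neg).integrableAtFilter _) (fun t ht ↦ ?_) hlim
  obtain ⟨b, hb⟩ := mem_atTop_sets.1 ht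
  exact measure_mono_top hb Real.volume_Ici

end Calculus

section Laplace

lemma abs_mul_exp_le {δ : ℝ} (hδ : 0 < δ) {s t : ℝ} (hst : |s - t| ≤ δ) (x : ℝ) :
    |x| * Real.exp (s * x) ≤
      δ⁻¹ * (Real.exp ((t - 2 * δ) * x) + Real.exp ((t + 2 * δ) * x)) := by
  have hx : |x| ≤ δ⁻¹ * Real.exp (δ * |x|) := by
    rw [le_inv_mul_iff₀ hδ]
    linarith [Real.add_one_le_exp (δ * |x|)]
  have hsx : s * x ≤ t * x + δ * |x| := by
    have : (s - t) * x ≤ δ * |x| :=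
      (le_abs_self _).trans (by rw [abs_mul]; gcongr)
    linarith
  have hsplit : Real.exp (t * x + 2 * δ * |x|) ≤
      Real.exp ((t - 2 * δ) * x) + Real.exp ((t + 2 * δ) * x) := by
    rcases abs_cases x with ⟨h, -⟩ | ⟨h, -⟩ <;> rw [h]
    · rw [← add_mul]; linarith [Real.exp_pos ((t - 2 * δ) * x)]
    · rw [mul_neg, ← sub_eq_add_neg, ← sub_mul]; linarith [Real.exp_pos ((t + 2 * δ) * x)]
  calc |x| * Real.exp (s * x)
      ≤ δ⁻¹ * Real.exp (δ * |x|) * Real.exp (t * x + δ * |x|) := by gcongr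
    _ = δ⁻¹ * Real.exp (t * x + 2 * δ * |x|) := by
        rw [mul_assoc, ← Real.exp_add]; ring_nf
    _ ≤ _ := by gcongr

variable {Ω E : Type*} {_ : MeasurableSpace Ω} {μ : Measure Ω} [NormedAddCommGroup E]
  [NormedSpace ℝ E]

lemma hasDerivAt_integral_exp_mul_smul {X : Ω → ℝ} {f : Ω → E} {t : ℝ} (hX : AEMeasurable X μ)
    (h : ∀ᶠ s in 𝓝 t, Integrable (fun ω ↦ Real.exp (s * X ω) • f ω) μ) :
    Integrable (fun ω ↦ X ω • Real.exp (t * X ω) • f ω) μ ∧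
      HasDerivAt (fun s ↦ ∫ ω, Real.exp (s * X ω) • f ω ∂μ)
        (∫ ω, X ω • Real.exp (t * X ω) • f ω ∂μ) t := by
  obtain ⟨ε, hε, hball⟩ := Metric.eventually_nhds_iff_ball.1 h
  have hint {s : ℝ} (hs : |s - t| < ε) : Integrable (fun ω ↦ Real.exp (s * X ω) • f ω) μ :=
    hball s (by rwa [Metric.mem_ball, Real.dist_eq])
  obtain ⟨δ, hδ, hδε⟩ : ∃ δ > 0, 2 * δ < ε := ⟨ε / 4, by positivity, by linarith⟩
  have h₁ : Integrable (fun ω ↦ Real.exp ((t - 2 * δ) * X ω) • f ω) μ :=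
    hint (by rw [abs_lt]; constructor <;> linarith)
  have h₂ : Integrable (fun ω ↦ Real.exp ((t + 2 * δ) * X ω) • f ω) μ :=
    hint (by rw [abs_lt]; constructor <;> linarith)
  refine hasDerivAt_integral_of_dominated_loc_of_deriv_le (Metric.ball_mem_nhds t hδ)
    (F' := fun s ω ↦ X ω • Real.exp (s * X ω) • f ω)
    (h.mono fun s hs ↦ hs.aestronglyMeasurable) h.self_of_nhds
    (hX.aestronglyMeasurable.smul h.self_of_nhds.aestronglyMeasurable)
    (ae_of_all _ fun ω s hs ↦ ?_) ((h₁.norm.add h₂.norm).const_mul δ⁻¹)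
    (ae_of_all _ fun ω s _ ↦ ?_)
  · have hst : |s - t| ≤ δ := by simpa only [Real.dist_eq] using (Metric.mem_ball.1 hs).le
    simp only [Pi.add_apply, norm_smul, Real.norm_eq_abs, Real.abs_exp]
    rw [← mul_assoc, ← add_mul, ← mul_assoc]
    exact mul_le_mul_of_nonneg_right (abs_mul_exp_le hδ hst _) (norm_nonneg _)
  · rw [smul_smul, mul_comm]
    simpa only [id, one_mul] using (((hasDerivAt_id s).mul_const (X ω)).exp).smul_const (f ω)

end Laplace

section Gaussian

variable {E : Type*} [NormedAddCommGroup E] [NormedSpace ℝ E] {m : ℝ} {v : ℝ≥0}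

lemma integrable_gaussianReal_iff (hv : v ≠ 0) {f : ℝ → E} :
    Integrable f (gaussianReal m v) ↔ Integrable (fun y ↦ gaussianPDFReal m v y • f y) := by
  simp only [gaussianReal_of_var_ne_zero m hv, integrable_withDensity_iff_integrable_smul'
    (measurable_gaussianPDF m v) (ae_of_all _ fun _ ↦ gaussianPDF_lt_top), toReal_gaussianPDF]

lemma gaussianPDFReal_le (m : ℝ) (v : ℝ≥0) (y : ℝ) :
    gaussianPDFReal m v y ≤ (√(2 * Real.pi * v))⁻¹ := by
  refine mul_le_of_le_one_right (by positivity) (Real.exp_le_one_iff.2 ?_)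
  exact div_nonpos_of_nonpos_of_nonneg (neg_nonpos.2 (sq_nonneg _)) (by positivity)

lemma hasDerivAt_gaussianPDFReal (m : ℝ) (v : ℝ≥0) (y : ℝ) :
    HasDerivAt (gaussianPDFReal m v) (-((y - m) / v) * gaussianPDFReal m v y) y := by
  have h := ((((((hasDerivAt_id y).sub_const m).pow 2).neg).div_const (2 * (v : ℝ))).exp).const_mul
    (√(2 * Real.pi * v))⁻¹
  refine h.congr_deriv ?_
  simp only [gaussianPDFReal, id, Pi.neg_apply, Pi.pow_apply]
  field_simp
  norm_num

lemma norm_gaussianPDFReal_smul_le (f : ℝ → E) (y : ℝ) :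
    ‖gaussianPDFReal m v y • f y‖ ≤ (√(2 * Real.pi * v))⁻¹ * ‖f y‖ := by
  rw [norm_smul, Real.norm_of_nonneg (gaussianPDFReal_nonneg m v y)]
  gcongr
  exact gaussianPDFReal_le m v y

lemma integrable_gaussianReal_of_integrable_volume (hv : v ≠ 0) {f : ℝ → E} (hf : Integrable f) :
    Integrable f (gaussianReal m v) := by
  rw [integrable_gaussianReal_iff hv]
  exact (hf.norm.const_mul _).mono'
    ((measurable_gaussianPDFReal m v).aestronglyMeasurable.smul hf.aestronglyMeasurable)
    (ae_of_all _ fun y ↦ norm_gaussianPDFReal_smul_le f y)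

lemma tendsto_gaussianPDFReal_mean_atTop (hv : v ≠ 0) (y : ℝ) :
    Tendsto (fun m ↦ gaussianPDFReal m v y) atTop (𝓝 0) := by
  have hsub : Tendsto (fun m ↦ m - y) atTop atTop := tendsto_atTop_add_const_right _ (-y) tendsto_id
  have hsq : Tendsto (fun m ↦ -((m - y) ^ 2 / (2 * (v : ℝ)))) atTop atBot :=
    tendsto_neg_atTop_atBot.comp
      (((tendsto_pow_atTop two_ne_zero).comp hsub).atTop_div_const (by positivity))
  have h := (Real.tendsto_exp_atBot.comp hsq).const_mul (√(2 * Real.pi * v))⁻¹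
  rw [mul_zero] at h
  refine h.congr fun m ↦ ?_
  rw [gaussianPDFReal, ← neg_sub m y, neg_sq, neg_div, Function.comp_apply]

lemma tendsto_integral_gaussianReal_mean_atTop (hv : v ≠ 0) {f : ℝ → E} (hf : Integrable f) :
    Tendsto (fun m ↦ ∫ y, f y ∂gaussianReal m v) atTop (𝓝 0) := by
  simp only [integral_gaussianReal_eq_integral_smul hv]
  rw [← integral_zero ℝ E]
  refine tendsto_integral_filter_of_dominated_convergence _ (Eventually.of_forall fun m ↦ ?_)
    (Eventually.of_forall fun m ↦ ae_of_all _ fun y ↦ norm_gaussianPDFReal_smul_le f y)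
    (hf.norm.const_mul _) (ae_of_all _ fun y ↦ ?_)
  · exact (measurable_gaussianPDFReal m v).aestronglyMeasurable.smul hf.aestronglyMeasurable
  · simpa only [zero_smul] using (tendsto_gaussianPDFReal_mean_atTop hv y).smul_const (f y)

lemma gaussianReal_tilted_mul (m : ℝ) (v : ℝ≥0) (t : ℝ) :
    (gaussianReal m v).tilted (fun y ↦ t * y) = gaussianReal (m + v * t) v := by
  have hmgf : ∫ y, Real.exp (t * y) ∂gaussianReal m v = Real.exp (m * t + v * t ^ 2 / 2) :=
    congrFun mgf_fun_id_gaussianReal t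
  rcases eq_or_ne v 0 with rfl | hv
  · simp only [gaussianReal_zero_var, NNReal.coe_zero, zero_mul, add_zero]
    rw [tilted_congr (g := fun _ ↦ t * m) (by rw [EventuallyEq, ae_dirac_eq]; rfl), tilted_const]
  rw [Measure.tilted, hmgf, gaussianReal_of_var_ne_zero _ hv, gaussianReal_of_var_ne_zero _ hv,
    ← withDensity_mul _ (measurable_gaussianPDF m v) (by fun_prop)]
  congr with y
  rw [Pi.mul_apply, gaussianPDF, gaussianPDF, ← ENNReal.ofReal_mul (gaussianPDFReal_nonneg m v y),
    gaussianPDFReal, gaussianPDFReal, ← Real.exp_sub, mul_assoc, ← Real.exp_add]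
  congr 3
  field_simp
  ring

lemma integrable_gaussianReal_add_mul_iff {f : ℝ → E} (t : ℝ) :
    Integrable f (gaussianReal (m + v * t) v) ↔
      Integrable (fun y ↦ Real.exp (t * y) • f y) (gaussianReal m v) := by
  rw [← gaussianReal_tilted_mul, integrable_tilted_iff (integrable_exp_mul_gaussianReal t)]

lemma integral_gaussianReal_add_mul (f : ℝ → E) (t : ℝ) :
    ∫ y, f y ∂gaussianReal (m + v * t) v =
      Real.exp (-(m * t + v * t ^ 2 / 2)) • ∫ y, Real.exp (t * y) • f y ∂gaussianReal m v := by
  have hmgf : ∫ y, Real.exp (t * y) ∂gaussianReal m v = Real.exp (m * t + v * t ^ 2 / 2) :=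
    congrFun mgf_fun_id_gaussianReal t
  rw [← gaussianReal_tilted_mul, integral_tilted, hmgf, ← integral_smul]
  simp only [smul_smul, Real.exp_neg, div_eq_inv_mul]

lemma hasDerivAt_integral_exp_smul_gaussianReal {f : ℝ → E}
    (hf : ∀ m, Integrable f (gaussianReal m v)) (m : ℝ) :
    Integrable (fun y ↦ y • f y) (gaussianReal m v) ∧
      HasDerivAt (fun t ↦ ∫ y, Real.exp (t * y) • f y ∂gaussianReal m v)
        (∫ y, y • f y ∂gaussianReal m v) 0 := by
  simpa only [zero_mul, Real.exp_zero, one_smul] using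
    hasDerivAt_integral_exp_mul_smul (X := fun y ↦ y) (t := 0) aemeasurable_id'
      (Eventually.of_forall fun t ↦ (integrable_gaussianReal_add_mul_iff t).1 (hf _))

lemma integrable_id_smul_gaussianReal {f : ℝ → E} (hf : ∀ m, Integrable f (gaussianReal m v))
    (m : ℝ) : Integrable (fun y ↦ y • f y) (gaussianReal m v) :=
  (hasDerivAt_integral_exp_smul_gaussianReal hf m).1

lemma integral_sub_mean_smul_gaussianReal {f : ℝ → E} (hf : ∀ m, Integrable f (gaussianReal m v))
    (m : ℝ) :
    ∫ y, (y - m) • f y ∂gaussianReal m v =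
      ∫ y, y • f y ∂gaussianReal m v - m • ∫ y, f y ∂gaussianReal m v := by
  simp only [sub_smul]
  rw [integral_sub (integrable_id_smul_gaussianReal hf m) ((hf m).fun_smul m), integral_smul]

lemma hasDerivAt_integral_gaussianReal (hv : v ≠ 0) {f : ℝ → E}
    (hf : ∀ m, Integrable f (gaussianReal m v)) (m : ℝ) :
    HasDerivAt (fun m ↦ ∫ y, f y ∂gaussianReal m v)
      ((v : ℝ)⁻¹ • ∫ y, (y - m) • f y ∂gaussianReal m v) m := by
  have hfactor : HasDerivAt (fun t : ℝ ↦ Real.exp (-(m * t + v * t ^ 2 / 2))) (-m) 0 := by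
    have h := ((((hasDerivAt_id (0 : ℝ)).const_mul m).add
      (((hasDerivAt_pow 2 (0 : ℝ)).const_mul (v : ℝ)).div_const 2)).neg).exp
    simpa using h
  have htilt : HasDerivAt (fun t : ℝ ↦ ∫ y, f y ∂gaussianReal (m + v * t) v)
      (∫ y, (y - m) • f y ∂gaussianReal m v) 0 := by
    simp only [integral_gaussianReal_add_mul, integral_sub_mean_smul_gaussianReal hf]
    refine (hfactor.smul (hasDerivAt_integral_exp_smul_gaussianReal hf m).2).congr_deriv ?_
    simp [sub_eq_add_neg]
  have hparam : HasDerivAt (fun b : ℝ ↦ (v : ℝ)⁻¹ * (b - m)) (v : ℝ)⁻¹ m := by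
    simpa using ((hasDerivAt_id m).sub_const m).const_mul (v : ℝ)⁻¹
  have h := HasDerivAt.scomp_of_eq m htilt hparam (by simp)
  refine h.congr_of_eventuallyEq (Eventually.of_forall fun b ↦ ?_)
  simp only [Function.comp_apply, mul_inv_cancel_left₀ (NNReal.coe_ne_zero.2 hv),
    add_sub_cancel]

lemma integral_sub_mean_smul_gaussianReal_eq_smul_integral_deriv [CompleteSpace E]
    {f f' : ℝ → E} {s : Set ℝ} (hs : s.Countable) (hcont : Continuous f)
    (hderiv : ∀ y ∉ s, HasDerivAt f (f' y) y) (hf : Integrable f (gaussianReal m v))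
    (hf' : Integrable f' (gaussianReal m v))
    (hmul : Integrable (fun y ↦ (y - m) • f y) (gaussianReal m v)) :
    ∫ y, (y - m) • f y ∂gaussianReal m v = (v : ℝ) • ∫ y, f' y ∂gaussianReal m v := by
  rcases eq_or_ne v 0 with rfl | hv
  · simp
  have hv' : (v : ℝ) ≠ 0 := NNReal.coe_ne_zero.2 hv
  let p := gaussianPDFReal m v
  have hzero : ∫ y, p y • (f' y - (v : ℝ)⁻¹ • (y - m) • f y) = 0 := by
    refine integral_eq_zero_of_hasDerivAt_off_countable (f := fun y ↦ p y • f y) hs ?_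
      (fun y hy ↦ ?_) ((integrable_gaussianReal_iff hv).1 hf)
      ((integrable_gaussianReal_iff hv).1 (hf'.sub (hmul.smul (v : ℝ)⁻¹)))
    · exact (continuous_iff_continuousAt.2
        fun y ↦ (hasDerivAt_gaussianPDFReal m v y).continuousAt).smul hcont
    · refine ((hasDerivAt_gaussianPDFReal m v y).smul (hderiv y hy)).congr_deriv ?_
      simp only [p]
      module
  rw [← integral_gaussianReal_eq_integral_smul hv, integral_sub hf' (hmul.fun_smul (v : ℝ)⁻¹),
    integral_smul, sub_eq_zero] at hzero
  rw [hzero, smul_inv_smul₀ hv']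

end Gaussian

section LogMean

lemma lipschitzWith_posLog : LipschitzWith 1 Real.posLog := by
  refine LipschitzWith.of_le_add fun x y ↦ ?_
  rw [← Real.posLog_abs x, ← Real.posLog_abs y, Real.posLog_eq_log_max_one (abs_nonneg x),
    Real.posLog_eq_log_max_one (abs_nonneg y), Real.dist_eq]
  have hx : 0 < max 1 |x| := by positivity
  have hy : 1 ≤ max 1 |y| := le_max_left _ _
  have hle : max 1 |x| ≤ max 1 |y| * (1 + |x - y|) := by
    have : max 1 |x| ≤ max 1 |y| + |x - y| :=
      max_le (by linarith [abs_nonneg (x - y)])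
        (by linarith [abs_sub_abs_le_abs_sub x y, le_max_right 1 |y|])
    nlinarith [abs_nonneg (x - y)]
  calc Real.log (max 1 |x|) ≤ Real.log (max 1 |y| * (1 + |x - y|)) := Real.log_le_log hx hle
    _ = Real.log (max 1 |y|) + Real.log (1 + |x - y|) :=
        Real.log_mul (by positivity) (by positivity)
    _ ≤ Real.log (max 1 |y|) + |x - y| := by
        gcongr
        linarith [Real.log_le_sub_one_of_pos (show 0 < 1 + |x - y| by positivity)]

lemma integrable_posLog_inv : Integrable (fun y : ℝ ↦ Real.posLog y⁻¹) := by
  have hlog : IntegrableOn (fun y ↦ -Real.log y) (Icc (-1) 1) := by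
    rw [integrableOn_Icc_iff_integrableOn_Ioc,
      ← intervalIntegrable_iff_integrableOn_Ioc_of_le (by norm_num)]
    exact intervalIntegral.intervalIntegrable_log'.neg
  have hind : (fun y : ℝ ↦ Real.posLog y⁻¹) = (Icc (-1) 1).indicator fun y ↦ -Real.log y := by
    funext y
    by_cases hy : y ∈ Icc (-1 : ℝ) 1
    · rw [indicator_of_mem hy, Real.posLog_apply, Real.log_inv, max_eq_right]
      rw [neg_nonneg, ← Real.log_abs]
      exact Real.log_nonpos (abs_nonneg y) (abs_le.2 hy)
    · rw [indicator_of_notMem hy, Real.posLog_eq_zero_iff, abs_inv]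
      exact inv_le_one_of_one_le₀ (not_le.1 (mt abs_le.1 hy)).le
  rw [hind]
  exact hlog.integrable_indicator measurableSet_Icc

lemma integrable_posLog_gaussianReal (m : ℝ) (v : ℝ≥0) :
    Integrable Real.posLog (gaussianReal m v) := by
  have hid : Integrable (fun y : ℝ ↦ y) (gaussianReal m v) :=
    memLp_one_iff_integrable.1 (memLp_id_gaussianReal 1)
  refine hid.mono Real.continuous_posLog.aestronglyMeasurable (ae_of_all _ fun y ↦ ?_)
  simpa using lipschitzWith_posLog.norm_sub_le y 0

lemma integrable_posLog_inv_gaussianReal (m : ℝ) (v : ℝ≥0) :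
    Integrable (fun y ↦ Real.posLog y⁻¹) (gaussianReal m v) := by
  rcases eq_or_ne v 0 with rfl | hv
  · rw [gaussianReal_zero_var]
    exact integrable_dirac (by finiteness)
  · exact integrable_gaussianReal_of_integrable_volume hv integrable_posLog_inv

lemma integrable_log_gaussianReal (m : ℝ) (v : ℝ≥0) : Integrable Real.log (gaussianReal m v) :=
  ((integrable_posLog_gaussianReal m v).sub (integrable_posLog_inv_gaussianReal m v)).congr
    (ae_of_all _ fun _ ↦ Real.posLog_sub_posLog_inv)

/-- The mean `E log |Y|` of the logarithm of a Gaussian variable `Y ∼ N(a, 1)`;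
recall that `Real.log y = log |y|`. -/
noncomputable def gaussianLogMean (a : ℝ) : ℝ := ∫ y, Real.log y ∂gaussianReal a 1

lemma gaussianLogMean_even : Function.Even gaussianLogMean := by
  intro a
  rw [gaussianLogMean, ← gaussianReal_map_neg,
    integral_map measurable_neg.aemeasurable Real.measurable_log.aestronglyMeasurable]
  simp only [Real.log_neg_eq_log, gaussianLogMean]

lemma hasDerivAt_gaussianLogMean (a : ℝ) :
    HasDerivAt gaussianLogMean
      (∫ y, y * Real.log y ∂gaussianReal a 1 - a * gaussianLogMean a) a := by
  have hlog (m : ℝ) := integrable_log_gaussianReal m 1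
  refine (hasDerivAt_integral_gaussianReal one_ne_zero hlog a).congr_deriv ?_
  simp only [integral_sub_mean_smul_gaussianReal hlog, NNReal.coe_one, inv_one, one_smul]
  rfl

lemma hasDerivAt_integral_mul_log_gaussianReal (a : ℝ) :
    HasDerivAt (fun a ↦ ∫ y, y * Real.log y ∂gaussianReal a 1) (gaussianLogMean a + 1) a := by
  have hlog (m : ℝ) := integrable_log_gaussianReal m 1
  have hmul (m : ℝ) := integrable_id_smul_gaussianReal hlog m
  have hsub : Integrable (fun y ↦ (y - a) • (y • Real.log y)) (gaussianReal a 1) := by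
    simp only [sub_smul]
    exact (integrable_id_smul_gaussianReal hmul a).sub ((hmul a).smul a)
  have hstein := integral_sub_mean_smul_gaussianReal_eq_smul_integral_deriv
    (countable_singleton (0 : ℝ)) Real.continuous_mul_log (fun y hy ↦ Real.hasDerivAt_mul_log hy)
    (hmul a) ((hlog a).add (integrable_const 1)) hsub
  refine (hasDerivAt_integral_gaussianReal one_ne_zero hmul a).congr_deriv ?_
  simp only [NNReal.coe_one, inv_one, one_smul]
  refine hstein.trans ?_
  simp [integral_add (hlog a) (integrable_const 1), gaussianLogMean]

lemma hasDerivAt_deriv_gaussianLogMean (a : ℝ) :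
    HasDerivAt (deriv gaussianLogMean) (1 - a * deriv gaussianLogMean a) a := by
  have h := (hasDerivAt_integral_mul_log_gaussianReal a).sub
    ((hasDerivAt_id a).mul (hasDerivAt_gaussianLogMean a).differentiableAt.hasDerivAt)
  refine (h.congr_deriv ?_).congr_of_eventuallyEq (.of_forall fun b ↦
    (hasDerivAt_gaussianLogMean b).deriv)
  simp only [id]
  ring

lemma tendsto_posLog_add_sub_posLog (x : ℝ) :
    Tendsto (fun a ↦ Real.posLog (x + a) - Real.posLog a) atTop (𝓝 0) := by
  refine (Real.tendsto_log_comp_add_sub_log x).congr' ?_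
  filter_upwards [eventually_ge_atTop 1, eventually_ge_atTop (1 - x)] with a ha hxa
  rw [Real.posLog_eq_log (ha.trans (le_abs_self a)), add_comm x,
    Real.posLog_eq_log (le_trans (by linarith) (le_abs_self (a + x)))]

lemma tendsto_integral_posLog_gaussianReal_sub_posLog (v : ℝ≥0) :
    Tendsto (fun a ↦ ∫ y, Real.posLog y ∂gaussianReal a v - Real.posLog a) atTop (𝓝 0) := by
  have hshift (a : ℝ) : ∫ x, (Real.posLog (x + a) - Real.posLog a) ∂gaussianReal 0 v =
      ∫ y, Real.posLog y ∂gaussianReal a v - Real.posLog a := by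
    have hcomp : Integrable (fun x ↦ Real.posLog (x + a)) (gaussianReal 0 v) := by
      refine Integrable.comp_measurable (g := Real.posLog) (f := (· + a)) ?_ (by fun_prop)
      rw [gaussianReal_map_add_const]
      exact integrable_posLog_gaussianReal _ v
    rw [integral_sub hcomp (integrable_const _), integral_const, probReal_univ, one_smul,
      ← integral_map (f := Real.posLog) (φ := (· + a)) (by fun_prop)
        Real.continuous_posLog.aestronglyMeasurable, gaussianReal_map_add_const, zero_add]
  simp only [← hshift]
  suffices Tendsto (fun a ↦ ∫ x, (Real.posLog (x + a) - Real.posLog a) ∂gaussianReal 0 v) atTop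
      (𝓝 (∫ _, 0 ∂gaussianReal 0 v)) by simpa only [integral_zero] using this
  refine tendsto_integral_filter_of_dominated_convergence (fun x ↦ ‖x‖)
    (Eventually.of_forall fun a ↦ ?_) (Eventually.of_forall fun a ↦ ae_of_all _ fun x ↦ ?_)
    (memLp_one_iff_integrable.1 (memLp_id_gaussianReal 1)).norm (ae_of_all _ fun x ↦ ?_)
  · exact ((Real.continuous_posLog.comp (continuous_add_const a)).sub
      continuous_const).aestronglyMeasurable
  · simpa using lipschitzWith_posLog.norm_sub_le (x + a) a
  · exact tendsto_posLog_add_sub_posLog x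

lemma gaussianLogMean_eq_integral_posLog_sub (a : ℝ) :
    gaussianLogMean a =
      ∫ y, Real.posLog y ∂gaussianReal a 1 - ∫ y, Real.posLog y⁻¹ ∂gaussianReal a 1 := by
  rw [← integral_sub (integrable_posLog_gaussianReal a 1) (integrable_posLog_inv_gaussianReal a 1)]
  simp only [Real.posLog_sub_posLog_inv, gaussianLogMean]

lemma tendsto_gaussianLogMean_sub_posLog :
    Tendsto (fun a ↦ gaussianLogMean a - Real.posLog a) atTop (𝓝 0) := by
  have h := (tendsto_integral_posLog_gaussianReal_sub_posLog 1).sub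
    (tendsto_integral_gaussianReal_mean_atTop one_ne_zero integrable_posLog_inv)
  rw [sub_zero] at h
  refine h.congr fun a ↦ ?_
  rw [gaussianLogMean_eq_integral_posLog_sub, sub_right_comm]

end LogMean

section Gap

lemma gGap_eq (a : ℝ) : gGap a = Real.log (1 + a ^ 2) - 2 * gaussianLogMean a := by
  have hmap : gaussianLogMean a = ∫ x, Real.log (x + a) ∂gaussianReal 0 1 := by
    rw [← integral_map (f := Real.log) (φ := (· + a)) (by fun_prop)
      Real.measurable_log.aestronglyMeasurable, gaussianReal_map_add_const, zero_add,
      gaussianLogMean]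
  rw [gGap, hmap, integral_gaussianReal_eq_integral_smul one_ne_zero, ← integral_const_mul,
    ← integral_const_mul]
  congr 2 with x
  simp only [gaussianPDFReal, NNReal.coe_one, mul_one, sub_zero, smul_eq_mul, Real.log_pow,
    Nat.cast_ofNat]
  ring

lemma hasDerivAt_log_one_add_sq (a : ℝ) :
    HasDerivAt (fun a ↦ Real.log (1 + a ^ 2)) (2 * a / (1 + a ^ 2)) a := by
  simpa using ((hasDerivAt_pow 2 a).const_add 1).log (by positivity)

lemma hasDerivAt_gGap (a : ℝ) :
    HasDerivAt gGap (2 * a / (1 + a ^ 2) - 2 * deriv gaussianLogMean a) a := by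
  rw [funext gGap_eq]
  exact (hasDerivAt_log_one_add_sq a).sub
    ((hasDerivAt_gaussianLogMean a).differentiableAt.hasDerivAt.const_mul 2)

lemma deriv_gGap_neg {a : ℝ} (ha : 0 < a) : deriv gGap a < 0 := by
  let w (x : ℝ) := 2 * deriv gaussianLogMean x - 2 * x / (1 + x ^ 2)
  have hw (x : ℝ) : HasDerivAt w (4 * x ^ 2 / (1 + x ^ 2) ^ 2 - x * w x) x := by
    have hquot := ((hasDerivAt_id x).const_mul 2).div ((hasDerivAt_pow 2 x).const_add 1)
      (show 1 + x ^ 2 ≠ 0 by positivity)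
    refine (((hasDerivAt_deriv_gaussianLogMean x).const_mul 2).sub hquot).congr_deriv ?_
    simp only [w, id]
    field_simp
    ring
  have hP (x : ℝ) : HasDerivAt (fun x ↦ x ^ 2 / 2) x x := by
    simpa using (hasDerivAt_pow 2 x).div_const 2
  have hzero : w 0 = 0 := by simp [w, deriv_zero_of_even gaussianLogMean_even]
  have hpos : 0 < w a :=
    pos_of_hasDerivAt_add_mul_pos hzero.ge (fun x _ ↦ hw x) (fun x _ ↦ hP x)
      (fun x hx ↦ by rw [sub_add_cancel]; positivity) ha
  rw [(hasDerivAt_gGap a).deriv]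
  simpa only [w, sub_pos, sub_neg] using hpos

lemma tendsto_log_one_add_sq_sub_two_mul_posLog :
    Tendsto (fun a ↦ Real.log (1 + a ^ 2) - 2 * Real.posLog a) atTop (𝓝 0) := by
  refine ((Real.tendsto_log_comp_add_sub_log 1).comp (tendsto_pow_atTop two_ne_zero)).congr' ?_
  filter_upwards [eventually_ge_atTop 1] with a ha
  rw [Function.comp_apply, Real.posLog_eq_log (ha.trans (le_abs_self a)), Real.log_pow, add_comm,
    Nat.cast_ofNat]

lemma tendsto_gGap_atTop : Tendsto gGap atTop (𝓝 0) := by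
  have h := tendsto_log_one_add_sq_sub_two_mul_posLog.sub
    (tendsto_gaussianLogMean_sub_posLog.const_mul 2)
  rw [mul_zero, sub_zero] at h
  refine h.congr fun a ↦ ?_
  rw [gGap_eq]
  ring

end Gap

/-- `g` is decreasing on `[0,∞)`, `g(0) = C₁`, and `g(a) → 0`
as `a → ∞`. -/
theorem gGap_strictAnti_and_value_and_limit :
    StrictAntiOn gGap (Set.Ici 0) ∧ gGap 0 = C1 ∧
      Tendsto gGap atTop (nhds 0) := by
  refine ⟨?_, by simp [gGap, C1], tendsto_gGap_atTop⟩
  refine strictAntiOn_of_deriv_neg (convex_Ici 0)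
    (fun a _ ↦ (hasDerivAt_gGap a).continuousAt.continuousWithinAt) fun a ha ↦ ?_
  rw [interior_Ici] at ha
  exact deriv_gGap_neg ha
end
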